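/- arXiv:1004.0066 — 2 statements merged into one kernel-verified Lean document; each statement's English description precedes it below -/
import Mathlib

section
/- Fix a special vertex V_0 of 𝔸 and let δ' = (V_0 ⊆ E_0' ⊇ V_1' ⊆ ⋯ ⊇ V_{r+1}') and δ'' = (V_0 ⊆ E_0'' ⊇ V_1'' ⊆ ⋯ ⊇ V_{r+1}'') be one-skeleton galleries with the same source V_0 such that, for every i, E_i' and E_i'' have the same type and V_i' and V_i'' have the same type. If both δ' and δ'' are minimal relative to the dominant Weyl chamber C⁺ (i.e. E_i' ⊆ V_i' + C⁺ and E_i'' ⊆ V_i'' + C⁺ for all i), then δ' = δ''. (This is the uniqueness assertion in the paper's Proposition on minimal one-skeleton galleries: there is at most one gallery of a given type, with given source, that is contained in the dominant Weyl chamber together with its chain of dominant sectors.) -/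
open Pointwise

variable {A : Type*} [NormedAddCommGroup A] [NormedSpace ℝ A]

/-- The three possible half-space choices `H_{β,n}`, `H⁺_{β,n}`, `H⁻_{β,n}`
attached to an affine root `(β, n)`. -/
def halfChoice (β : A →ₗ[ℝ] ℝ) (m : ℤ) (c : Fin 3) : Set A :=
  if c = 0 then {x | β x + (m : ℝ) = 0}
  else if c = 1 then {x | 0 ≤ β x + (m : ℝ)}
  else {x | β x + (m : ℝ) ≤ 0}

/-- A face of the apartment: a nonempty intersection, over all pairs `(β, n) ∈ Φ⁺ × ℤ`, of a
choice of the wall `H_{β,n}` or one of the two closed half-spaces it bounds. -/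
def IsFace (pos : Finset (A →ₗ[ℝ] ℝ)) (F : Set A) : Prop :=
  F.Nonempty ∧ ∃ σ : (A →ₗ[ℝ] ℝ) → ℤ → Fin 3,
    F = ⋂ β ∈ (pos : Set (A →ₗ[ℝ] ℝ)), ⋂ m : ℤ, halfChoice β m (σ β m)

/-- The dimension of a face: the dimension of its affine span. -/
noncomputable def faceDim (F : Set A) : ℕ := Module.finrank ℝ (affineSpan ℝ F).direction

/-- A vertex: a face of dimension zero. -/
def IsVertexFace (pos : Finset (A →ₗ[ℝ] ℝ)) (F : Set A) : Prop :=
  IsFace pos F ∧ faceDim F = 0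

/-- An edge: a face of dimension one. -/
def IsEdgeFace (pos : Finset (A →ₗ[ℝ] ℝ)) (F : Set A) : Prop :=
  IsFace pos F ∧ faceDim F = 1

/-- A point `x` is special if `α(x) ∈ ℤ` for all roots `α ∈ Φ`. -/
def IsSpecialPt (Φ : Finset (A →ₗ[ℝ] ℝ)) (x : A) : Prop :=
  ∀ α ∈ Φ, ∃ m : ℤ, α x = (m : ℝ)

/-- The affine Weyl group: the group of affine transformations of the apartment generated by
the affine reflections `s_{α,n} : x ↦ x − (α(x)+n)·α∨`. -/
def affWeyl (Φ : Finset (A →ₗ[ℝ] ℝ)) (cor : (A →ₗ[ℝ] ℝ) → A) : Subgroup (A ≃ᵃ[ℝ] A) :=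
  Subgroup.closure {g | ∃ α ∈ Φ, ∃ m : ℤ, ∀ x, g x = x - (α x + (m : ℝ)) • cor α}

/-- Two faces have the same type if they lie in the same orbit of the affine Weyl group. -/
def SameType (Φ : Finset (A →ₗ[ℝ] ℝ)) (cor : (A →ₗ[ℝ] ℝ) → A) (F F' : Set A) : Prop :=
  ∃ g ∈ affWeyl Φ cor, g '' F = F'

/-- The union of the walls through the origin. -/
def wallsSet (Φ : Finset (A →ₗ[ℝ] ℝ)) : Set A :=
  ⋃ α ∈ (Φ : Set (A →ₗ[ℝ] ℝ)), {x | α x = 0}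

/-- A closed Weyl chamber: the closure of a connected component of the complement of the
union of the walls through the origin. -/
def IsWeylChamber (Φ : Finset (A →ₗ[ℝ] ℝ)) (C : Set A) : Prop :=
  ∃ x ∈ (wallsSet Φ)ᶜ, C = closure (connectedComponentIn (wallsSet Φ)ᶜ x)

/-- The stabilizer in the affine Weyl group of a face `F`. -/
def faceStab (Φ : Finset (A →ₗ[ℝ] ℝ)) (cor : (A →ₗ[ℝ] ℝ) → A) (F : Set A) :
    Subgroup (A ≃ᵃ[ℝ] A) where
  carrier := {g | g ∈ affWeyl Φ cor ∧ g '' F = F}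
  one_mem' := ⟨Subgroup.one_mem _, by simp⟩
  mul_mem' := by
    rintro a b ⟨ha, ha'⟩ ⟨hb, hb'⟩
    refine ⟨mul_mem ha hb, ?_⟩
    have h : ⇑(a * b) = ⇑a ∘ ⇑b := rfl
    rw [h, Set.image_comp, hb', ha']
  inv_mem' := by
    rintro a ⟨ha, ha'⟩
    refine ⟨inv_mem ha, ?_⟩
    have h1 : ⇑(a⁻¹) '' (⇑a '' F) = ⇑(a⁻¹) '' F := by rw [ha']
    rw [← Set.image_comp,
      show ⇑(a⁻¹) ∘ ⇑a = id from funext fun x => by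
        simp [AffineEquiv.inv_def],
      Set.image_id] at h1
    exact h1.symm

/-- A one-skeleton gallery `(V_0 ⊆ E_0 ⊇ V_1 ⊆ ⋯ ⊇ V_r ⊆ E_r ⊇ V_{r+1})` in the apartment:
the `V_i` are vertices, `V_0` and `V_{r+1}` are special, and the `E_i` are edges. -/
structure OneSkelGallery (A : Type*) [NormedAddCommGroup A] [NormedSpace ℝ A]
    (Φ pos : Finset (A →ₗ[ℝ] ℝ)) (r : ℕ) where
  V : Fin (r + 2) → Set A
  E : Fin (r + 1) → Set A
  vertex_V : ∀ i, IsVertexFace pos (V i)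
  edge_E : ∀ i, IsEdgeFace pos (E i)
  special_source : ∀ x ∈ V 0, IsSpecialPt Φ x
  special_target : ∀ x ∈ V (Fin.last (r + 1)), IsSpecialPt Φ x
  subset_left : ∀ i : Fin (r + 1), V i.castSucc ⊆ E i
  subset_right : ∀ i : Fin (r + 1), V i.succ ⊆ E i

/-- The dominant Weyl chamber `C⁺ = {x | α(x) ≥ 0 for all α ∈ Φ⁺}`. -/
def domChamber (pos : Finset (A →ₗ[ℝ] ℝ)) : Set A :=
  {x | ∀ α ∈ pos, 0 ≤ α x}

section abstractRefl

variable {X : Type*}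

/-- affine roots separating two points -/
def sepSet (R : Set (X → ℝ)) (x y : X) : Set (X → ℝ) := {f | f ∈ R ∧ f x * f y < 0}

/-- the abstract properties of a set of affine roots and their reflections -/
structure ReflSys (R : Set (X → ℝ)) (s : (X → ℝ) → X → X) : Prop where
  clos : ∀ f ∈ R, ∀ g ∈ R, g ∘ s f ∈ R
  conj : ∀ f ∈ R, ∀ g ∈ R, s (g ∘ s f) = s f ∘ s g ∘ s f
  invol : ∀ f ∈ R, ∀ x, s f (s f x) = x
  anti : ∀ f ∈ R, ∀ x, f (s f x) = - f x
  lin : ∀ f ∈ R, ∀ g ∈ R, ∃ k : ℝ, ∀ x, g (s f x) = g x - k * f x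
  fixes : ∀ f ∈ R, ∀ x, f x = 0 → s f x = x
  fin : ∀ x y, (sepSet R x y).Finite
  neg : ∀ f ∈ R, -f ∈ R
  prop : ∀ f ∈ R, ∀ g ∈ R, ∀ t : ℝ, (∀ x, g x = t * f x) → s g = s f
  det : ∃ P : Finset X, ∀ f ∈ R, ∀ g ∈ R, ∀ t : ℝ, (∀ x ∈ P, g x = t * f x) → ∀ x, g x = t * f x

/-- simple affine roots relative to a regular point -/
def IsSimpleAt (R : Set (X → ℝ)) (s : (X → ℝ) → X → X) (p : X) (a : X → ℝ) : Prop :=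
  a ∈ R ∧ 0 < a p ∧ ∀ b ∈ R, b p * b (s a p) < 0 → ∃ t : ℝ, ∀ x, b x = t * a x

/-- the product of a list of reflections -/
def wordMap (s : (X → ℝ) → X → X) : List (X → ℝ) → X → X
  | [] => id
  | a :: l => s a ∘ wordMap s l

variable {R : Set (X → ℝ)} {s : (X → ℝ) → X → X}

theorem wordMap_append (l l' : List (X → ℝ)) :
    wordMap s (l ++ l') = wordMap s l ∘ wordMap s l' := by
  induction l with
  | nil => rfl
  | cons a l ih => simp only [List.cons_append, wordMap, ih]; rfl

theorem exists_wall (H : ReflSys R s) {p : X} (hp : ∀ f ∈ R, f p ≠ 0) (q : X)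
    (hne : (sepSet R p q).Nonempty) : ∃ a, IsSimpleAt R s p a ∧ a q < 0 := by
  classical
  obtain ⟨P, hP⟩ := H.det
  -- positive separators
  set N : Set (X → ℝ) := {f | f ∈ R ∧ 0 < f p ∧ f q < 0} with hN
  have hNfin : N.Finite := (H.fin p q).subset (fun f hf => ⟨hf.1, mul_neg_of_pos_of_neg hf.2.1 hf.2.2⟩)
  have hNne : N.Nonempty := by
    obtain ⟨f, hf, hfn⟩ := hne
    rcases mul_neg_iff.1 hfn with h | h
    · exact ⟨f, hf, h.1, h.2⟩
    · exact ⟨-f, H.neg f hf, by simpa using h.1, by simpa using h.2⟩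
  obtain ⟨a0, ha0, hmin⟩ := Set.exists_min_image N (fun f => f p / (-f q)) hNfin hNne
  set ρ := a0 p / (-a0 q) with hρ
  set T : Set (X → ℝ) := {f | f ∈ N ∧ f p / (-f q) = ρ} with hT
  have hTfin : T.Finite := hNfin.subset (fun f hf => hf.1)
  obtain ⟨a, ha, hmax⟩ := Set.exists_max_image T (fun f => ∑ x ∈ P, (f x / f p) ^ 2) hTfin
    ⟨a0, ha0, rfl⟩
  have hρpos : 0 < ρ := div_pos ha0.2.1 (by linarith [ha0.2.2])
  have key : ∀ f ∈ N, ρ * (-f q) ≤ f p := by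
    intro f hf
    have := hmin f hf
    rwa [le_div_iff₀ (by linarith [hf.2.2])] at this
  have keyT : ∀ f ∈ N, f p ≤ ρ * (-f q) → f ∈ T := by
    intro f hf h
    refine ⟨hf, ?_⟩
    rw [div_eq_iff (by linarith [hf.2.2])]
    linarith [key f hf]
  have haN := ha.1
  have haR := haN.1
  have hae : a p = ρ * (-a q) := by
    have := ha.2
    rwa [div_eq_iff (by linarith [haN.2.2])] at this
  refine ⟨a, ⟨haR, haN.2.1, ?_⟩, haN.2.2⟩
  -- wlog b p > 0
  have main : ∀ b ∈ R, 0 < b p → b (s a p) < 0 → ∃ t : ℝ, ∀ x, b x = t * a x := by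
    intro b hb hbp hbs
    obtain ⟨k, hk⟩ := H.lin a haR b hb
    have hcR : -(b ∘ s a) ∈ R := H.neg _ (H.clos a haR b hb)
    set c := -(b ∘ s a) with hc
    have hcx : ∀ x, c x = k * a x - b x := by
      intro x; simp only [hc, Pi.neg_apply, Function.comp, hk]; ring
    have hcp : 0 < c p := by simpa [hc] using hbs
    have hsp := hcx p
    have hsq := hcx q
    have hap := haN.2.1
    have haq := haN.2.2
    have hkpos : 0 < k := by
      by_contra h
      have : k * a p ≤ 0 := mul_nonpos_of_nonpos_of_nonneg (not_lt.1 h) hap.le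
      linarith
    have hkaq : k * a q < 0 := mul_neg_of_pos_of_neg hkpos haq
    have hkk : k * a p = ρ * (-(k * a q)) := by rw [hae]; ring
    have hbq : b q < 0 := by
      by_contra h
      have hcN : c ∈ N := ⟨hcR, hcp, by linarith⟩
      have h1 := key c hcN
      have : 0 ≤ ρ * b q := mul_nonneg hρpos.le (not_lt.1 h)
      rw [hsq] at h1
      nlinarith
    have hcq : c q < 0 := by
      by_contra h
      have hbN : b ∈ N := ⟨hb, hbp, hbq⟩
      have h1 := key b hbN
      have : 0 ≤ ρ * c q := mul_nonneg hρpos.le (not_lt.1 h)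
      rw [hsq] at this
      nlinarith
    have hbN : b ∈ N := ⟨hb, hbp, hbq⟩
    have hcN : c ∈ N := ⟨hcR, hcp, hcq⟩
    have h1 := key b hbN
    have h2 := key c hcN
    have hbT : b ∈ T := keyT b hbN (by rw [hsq] at h2; nlinarith)
    have hcT : c ∈ T := keyT c hcN (by rw [hsq]; nlinarith)
    have m1 := hmax b hbT
    have m2 := hmax c hcT
    set lam := b p / (k * a p) with hlam
    set mu := c p / (k * a p) with hmu
    have hka : 0 < k * a p := mul_pos hkpos hap
    have hl : 0 < lam := div_pos hbp hka
    have hm : 0 < mu := div_pos hcp hka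
    have hlm : lam + mu = 1 := by rw [hlam, hmu, ← add_div, hsp]; field_simp; ring
    have hcomb : ∀ x, a x / a p = lam * (b x / b p) + mu * (c x / c p) := by
      intro x
      have : lam * (b x / b p) = b x / (k * a p) := by rw [hlam]; field_simp
      rw [this]
      have : mu * (c x / c p) = c x / (k * a p) := by rw [hmu]; field_simp
      rw [this, ← add_div, hcx]
      field_simp; ring
    have hid : ∀ x, lam * (b x / b p) ^ 2 + mu * (c x / c p) ^ 2 - (a x / a p) ^ 2
        = lam * mu * (b x / b p - c x / c p) ^ 2 := by
      intro x
      rw [hcomb]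
      have : mu = 1 - lam := by linarith
      rw [this]; ring
    have hsum : ∑ x ∈ P, lam * mu * (b x / b p - c x / c p) ^ 2 ≤ 0 := by
      rw [← Finset.sum_congr rfl (fun x _ => hid x)]
      rw [Finset.sum_sub_distrib, Finset.sum_add_distrib, ← Finset.mul_sum, ← Finset.mul_sum]
      have e1 := mul_le_mul_of_nonneg_left m1 hl.le
      have e2 := mul_le_mul_of_nonneg_left m2 hm.le
      have : ∀ z : ℝ, lam * z + mu * z = z := fun z => by rw [← add_mul, hlm, one_mul]
      have := this (∑ x ∈ P, (a x / a p) ^ 2)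
      linarith
    have hzero : ∀ x ∈ P, b x / b p = c x / c p := by
      intro x hx
      have hnn : ∀ x ∈ P, 0 ≤ lam * mu * (b x / b p - c x / c p) ^ 2 := fun x _ => by positivity
      have h0 := (Finset.sum_eq_zero_iff_of_nonneg hnn).1
        (le_antisymm hsum (Finset.sum_nonneg hnn)) x hx
      have : (b x / b p - c x / c p) ^ 2 = 0 := by
        rcases mul_eq_zero.1 h0 with h | h
        · exact absurd h (by positivity)
        · exact h
      have := pow_eq_zero_iff (two_ne_zero) |>.1 this
      linarith
    refine ⟨b p / a p, hP a haR b hb _ ?_⟩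
    intro x hx
    have h3 := hcomb x
    rw [← hzero x hx, ← add_mul, hlm, one_mul] at h3
    field_simp at h3 ⊢
    linarith
  intro b hb hbs
  rcases mul_neg_iff.1 hbs with h | h
  · exact main b hb h.1 h.2
  · obtain ⟨t, ht⟩ := main (-b) (H.neg b hb) (by simpa using h.1) (by simpa using h.2)
    refine ⟨-t, fun x => ?_⟩
    have := ht x
    simp only [Pi.neg_apply] at this
    linarith

/-- parity of separation -/
theorem sep_cases {u v w : ℝ} (hv : v ≠ 0) (h : u * w < 0) : u * v < 0 ∨ v * w < 0 := by
  rcases mul_neg_iff.1 h with h | h <;> rcases lt_or_gt_of_ne hv with h' | h'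
  · left; nlinarith
  · right; nlinarith
  · right; nlinarith
  · left; nlinarith

theorem regular_image (H : ReflSys R s) {p : X} (hp : ∀ f ∈ R, f p ≠ 0) {b : X → ℝ} (hb : b ∈ R) :
    ∀ f ∈ R, f (s b p) ≠ 0 := fun f hf => hp _ (H.clos b hb f hf)

theorem refl_gen (H : ReflSys R s) {p : X} (hp : ∀ f ∈ R, f p ≠ 0) :
    ∀ n : ℕ, ∀ b ∈ R, (sepSet R p (s b p)).ncard ≤ n →
      ∃ l : List (X → ℝ), (∀ a ∈ l, IsSimpleAt R s p a) ∧ s b = wordMap s l := by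
  intro n
  induction n with
  | zero =>
    intro b hb hn
    exfalso
    have h0 : sepSet R p (s b p) = ∅ := by
      rw [← Set.ncard_eq_zero (H.fin _ _)]; omega
    have : b ∈ sepSet R p (s b p) := by
      refine ⟨hb, ?_⟩
      rw [H.anti b hb]
      have := mul_self_pos.2 (hp b hb)
      linarith
    rw [h0] at this
    exact this
  | succ n ih =>
    intro b hb hn
    have hbm : b ∈ sepSet R p (s b p) := by
      refine ⟨hb, ?_⟩
      rw [H.anti b hb]
      have := mul_self_pos.2 (hp b hb)
      linarith
    obtain ⟨a, ha, haq⟩ := exists_wall H hp (s b p) ⟨b, hbm⟩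
    have haR := ha.1
    by_cases hprop : ∃ t : ℝ, ∀ x, a x = t * b x
    · obtain ⟨t, ht⟩ := hprop
      refine ⟨[a], by simpa using ha, ?_⟩
      rw [← H.prop b hb a haR t ht]; rfl
    have hsub : sepSet R (s a p) (s b (s a p)) ⊆ sepSet R p (s b p) \ {a} := by
      rintro f ⟨hf, hfs⟩
      constructor
      · by_contra hnot
        have hfN : ¬ f p * f (s b p) < 0 := fun h => hnot ⟨hf, h⟩
        rcases sep_cases (hp f hf) hfs with h | h
        · obtain ⟨t, ht⟩ := ha.2.2 f hf (by linarith)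
          apply hfN
          rw [ht p, ht (s b p)]
          have h1 : t ≠ 0 := by
            rintro rfl
            exact hp f hf (by rw [ht]; ring)
          have h2 := mul_self_pos.2 h1
          have h3 := mul_neg_of_pos_of_neg ha.2.1 haq
          nlinarith
        · rcases sep_cases (regular_image H hp hb f hf) h with h | h
          · exact hfN h
          · obtain ⟨t, ht⟩ := ha.2.2 (f ∘ s b) (H.clos b hb f hf) h
            apply hfN
            have e1 := ht p
            have e2 := ht (s b p)
            simp only [Function.comp, H.invol b hb] at e1 e2
            rw [e1, e2]
            have h1 : t ≠ 0 := by
              rintro rfl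
              exact hp f hf (by rw [e2]; ring)
            have h2 := mul_self_pos.2 h1
            have h3 := mul_neg_of_pos_of_neg ha.2.1 haq
            nlinarith
      · rintro rfl
        rw [H.anti f hf] at hfs
        have hpos := ha.2.1
        have h4 : 0 < f (s b (s f p)) := by
          by_contra h
          have := mul_nonneg hpos.le (neg_nonneg.2 (not_lt.1 h))
          linarith
        obtain ⟨t, ht⟩ := ha.2.2 (f ∘ s b) (H.clos b hb f hf)
          (by simpa [Function.comp] using mul_neg_of_neg_of_pos haq h4)
        obtain ⟨k, hk⟩ := H.lin b hb f hf
        have e : ∀ x, (1 - t) * f x = k * b x := by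
          intro x
          have e1 := ht x
          simp only [Function.comp, hk] at e1
          linarith
        have ht1 : 1 - t ≠ 0 := by
          intro h0
          have e1 := ht p
          simp only [Function.comp] at e1
          have : t = 1 := by linarith
          rw [this] at e1
          linarith
        apply hprop
        refine ⟨k / (1 - t), fun x => ?_⟩
        have := e x
        field_simp
        linarith
    have hcard : (sepSet R (s a p) (s b (s a p))).ncard ≤ n := by
      have h1 := Set.ncard_le_ncard hsub ((H.fin _ _).subset Set.sdiff_subset)
      have ham : a ∈ sepSet R p (s b p) := ⟨haR, mul_neg_of_pos_of_neg ha.2.1 haq⟩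
      have h2 := Set.ncard_sdiff_singleton_lt_of_mem ham (H.fin _ _)
      omega
    set c := b ∘ s a with hc
    have hcR : c ∈ R := H.clos a haR b hb
    have hsc : s c = s a ∘ s b ∘ s a := H.conj a haR b hb
    have hcard' : (sepSet R p (s c p)).ncard ≤ n := by
      refine le_trans (Set.ncard_le_ncard_of_injOn (fun f => f ∘ s a) ?_ ?_ (H.fin _ _)) hcard
      · rintro f ⟨hf, hfs⟩
        refine ⟨H.clos a haR f hf, ?_⟩
        simp only [Function.comp, H.invol a haR]
        rw [hsc] at hfs
        exact hfs
      · intro f _ g _ hfg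
        funext x
        have := congrFun hfg (s a x)
        simpa [Function.comp, H.invol a haR] using this
    obtain ⟨l, hl, hls⟩ := ih c hcR hcard'
    refine ⟨a :: (l ++ [a]), ?_, ?_⟩
    · intro a' ha'
      simp only [List.mem_cons, List.mem_append, List.not_mem_nil, or_false] at ha'
      rcases ha' with rfl | h | rfl
      · exact ha
      · exact hl _ h
      · exact ha
    · rw [wordMap, wordMap_append, ← hls, hsc]
      funext x
      simp [wordMap, Function.comp, H.invol a haR]

theorem exchange (H : ReflSys R s) {p : X} (hp : ∀ f ∈ R, f p ≠ 0) (l : List (X → ℝ)) :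
    (∀ a ∈ l, IsSimpleAt R s p a) → ∀ b ∈ R, b p * b (wordMap s l p) < 0 →
    ∃ l' : List (X → ℝ), (∀ a ∈ l', IsSimpleAt R s p a) ∧ l'.length < l.length ∧
      s b ∘ wordMap s l = wordMap s l' := by
  induction l with
  | nil =>
    intro _ b _ h
    simp only [wordMap, id] at h
    have := mul_self_nonneg (b p)
    linarith
  | cons a l ih =>
    intro hl b hb h
    have ha := hl a (by simp)
    have haR := ha.1
    have hl' : ∀ a ∈ l, IsSimpleAt R s p a := fun x hx => hl x (by simp [hx])
    rcases sep_cases (regular_image H hp haR b hb) h with h1 | h1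
    · obtain ⟨t, ht⟩ := ha.2.2 b hb h1
      refine ⟨l, hl', by simp, ?_⟩
      rw [H.prop a haR b hb t ht]
      funext x
      simp [wordMap, Function.comp, H.invol a haR]
    · obtain ⟨l', hl1, hl2, hl3⟩ := ih hl' (b ∘ s a) (H.clos a haR b hb) h1
      refine ⟨a :: l', ?_, by simpa using hl2, ?_⟩
      · intro x hx
        rcases List.mem_cons.1 hx with rfl | hx
        · exact ha
        · exact hl1 x hx
      · rw [wordMap, wordMap, ← hl3, H.conj a haR b hb]
        funext x
        simp [Function.comp, H.invol a haR]

theorem word_fix (H : ReflSys R s) {p : X} (hp : ∀ f ∈ R, f p ≠ 0) (x : X)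
    (hx : ∀ f ∈ R, 0 < f p → 0 ≤ f x) :
    ∀ n : ℕ, ∀ l : List (X → ℝ), l.length ≤ n → (∀ a ∈ l, IsSimpleAt R s p a) →
      (∀ f ∈ R, 0 < f p → 0 ≤ f (wordMap s l x)) → wordMap s l x = x := by
  intro n
  induction n with
  | zero =>
    intro l hl _ _
    have : l = [] := List.length_eq_zero_iff.1 (by omega)
    subst this; rfl
  | succ n ih =>
    intro l hlen hl hy
    match l, hlen, hl, hy with
    | [], _, _, _ => rfl
    | a :: l, hlen, hl, hy =>
      have ha := hl a (by simp)
      have haR := ha.1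
      have hl' : ∀ a ∈ l, IsSimpleAt R s p a := fun x hx => hl x (by simp [hx])
      simp only [List.length_cons] at hlen
      have clos_word : ∀ l : List (X → ℝ), (∀ a ∈ l, IsSimpleAt R s p a) →
          ∀ f ∈ R, f ∘ wordMap s l ∈ R := by
        intro l
        induction l with
        | nil => intro _ f hf; exact hf
        | cons a l ihl =>
          intro h f hf
          exact ihl (fun x hx => h x (by simp [hx])) _ (H.clos a (h a (by simp)).1 f hf)
      rcases (hy a haR ha.2.1).eq_or_lt with h0 | h0
      · have e : wordMap s (a :: l) x = wordMap s l x := by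
          have e1 := H.fixes a haR _ h0.symm
          rw [← e1]
          simp [wordMap, Function.comp, H.invol a haR]
        rw [e] at hy ⊢
        exact ih l (by omega) hl' hy
      · have hgR := clos_word (a :: l) hl a haR
        have hgp : 0 < a (wordMap s (a :: l) p) := by
          by_contra h
          have hneg := H.neg _ hgR
          have h2 := hp _ hgR
          have h3 : 0 < (-(a ∘ wordMap s (a :: l))) p := by
            simp only [Pi.neg_apply, Function.comp] at h2 ⊢
            rcases lt_or_gt_of_ne h2 with h4 | h4
            · linarith
            · exact absurd h4 h
          have := hx _ hneg h3
          simp only [Pi.neg_apply, Function.comp] at this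
          linarith
        have h5 : a (wordMap s l p) < 0 := by
          have : a (wordMap s (a :: l) p) = - a (wordMap s l p) := H.anti a haR _
          linarith
        obtain ⟨l', hl1, hl2, hl3⟩ := exchange H hp l hl' a haR (mul_neg_of_pos_of_neg ha.2.1 h5)
        have e : wordMap s (a :: l) x = wordMap s l' x := by rw [← hl3]; rfl
        rw [e] at hy ⊢
        exact ih l' (by omega) hl1 hy

theorem refl_word_fix (H : ReflSys R s) {p : X} (hp : ∀ f ∈ R, f p ≠ 0) (x : X)
    (hx : ∀ f ∈ R, 0 < f p → 0 ≤ f x) (l : List (X → ℝ)) (hl : ∀ a ∈ l, a ∈ R)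
    (hy : ∀ f ∈ R, 0 < f p → 0 ≤ f (wordMap s l x)) : wordMap s l x = x := by
  have : ∃ l' : List (X → ℝ), (∀ a ∈ l', IsSimpleAt R s p a) ∧ wordMap s l = wordMap s l' := by
    clear hy
    induction l with
    | nil => exact ⟨[], by simp, rfl⟩
    | cons a l ih =>
      obtain ⟨l1, h1, h2⟩ := ih (fun x hx => hl x (by simp [hx]))
      obtain ⟨l2, h3, h4⟩ := refl_gen H hp _ a (hl a (by simp)) le_rfl
      refine ⟨l2 ++ l1, ?_, ?_⟩
      · intro x hx
        rcases List.mem_append.1 hx with h | h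
        · exact h3 x h
        · exact h1 x h
      · rw [wordMap_append, ← h4, ← h2]; rfl
  obtain ⟨l', h1, h2⟩ := this
  rw [h2] at hy ⊢
  exact word_fix H hp x hx _ l' le_rfl h1 hy

end abstractRefl

section concreteRefl

/-- the affine roots as functions -/
def affRoots {A : Type*} [NormedAddCommGroup A] [NormedSpace ℝ A]
    (Φ : Finset (A →ₗ[ℝ] ℝ)) : Set (A → ℝ) :=
  {f | ∃ α ∈ Φ, ∃ m : ℤ, f = fun x => α x + (m : ℝ)}

open Classical in
/-- the reflection in an affine root -/
noncomputable def affRefl {A : Type*} [NormedAddCommGroup A] [NormedSpace ℝ A]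
    (Φ : Finset (A →ₗ[ℝ] ℝ)) (cor : (A →ₗ[ℝ] ℝ) → A) (f : A → ℝ) (x : A) : A :=
  if h : ∃ α ∈ Φ, ∃ m : ℤ, f = fun x => α x + (m : ℝ) then x - f x • cor h.choose else x

theorem affRefl_apply {A : Type*} [NormedAddCommGroup A] [NormedSpace ℝ A]
    (Φ : Finset (A →ₗ[ℝ] ℝ)) (cor : (A →ₗ[ℝ] ℝ) → A) (f : A → ℝ) (α : A →ₗ[ℝ] ℝ) (hα : α ∈ Φ)
    (m : ℤ) (hf : f = fun x => α x + (m : ℝ)) (x : A) :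
    affRefl Φ cor f x = x - (α x + (m : ℝ)) • cor α := by
  have h : ∃ α ∈ Φ, ∃ m : ℤ, f = fun x => α x + (m : ℝ) := ⟨α, hα, m, hf⟩
  rw [affRefl, dif_pos h]
  obtain ⟨h1, n, h2⟩ := h.choose_spec
  have : h.choose = α := by
    have h2 := hf.symm.trans h2
    ext y
    have e0 := congrFun h2 0
    have e1 := congrFun h2 y
    simp only [map_zero] at e0
    linarith
  rw [this, hf]

theorem coroot_unique {A : Type*} [NormedAddCommGroup A] [NormedSpace ℝ A]
    [FiniteDimensional ℝ A]
    (Φ : Finset (A →ₗ[ℝ] ℝ)) (cor : (A →ₗ[ℝ] ℝ) → A)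
    (hne : ∀ α ∈ Φ, α ≠ (0 : A →ₗ[ℝ] ℝ))
    (hspan : Submodule.span ℝ (Φ : Set (A →ₗ[ℝ] ℝ)) = ⊤)
    (hcor : ∀ α ∈ Φ, α (cor α) = 2)
    (hinv : ∀ α ∈ Φ, ∀ β ∈ Φ, β - β (cor α) • α ∈ Φ)
    (γ : A →ₗ[ℝ] ℝ) (hγ : γ ∈ Φ) (v : A) (hv : γ v = 2)
    (hvinv : ∀ δ ∈ Φ, δ - δ v • γ ∈ Φ) : cor γ = v := by
  have key : ∀ δ ∈ Φ, δ (cor γ) = δ v := by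
    intro δ hδ
    by_contra hcon
    set d := δ (cor γ) - δ v with hd
    have hd0 : d ≠ 0 := sub_ne_zero.2 hcon
    have hmem : ∀ n : ℕ, δ + ((n : ℝ) * d) • γ ∈ Φ := by
      intro n
      induction n with
      | zero => simpa using hδ
      | succ n ih =>
        have h1 := hvinv _ (hinv γ hγ _ ih)
        convert h1 using 1
        ext x
        simp only [LinearMap.add_apply, LinearMap.sub_apply, LinearMap.smul_apply, smul_eq_mul,
          hcor γ hγ, hv, hd]
        push_cast
        ring
    have hinj : Function.Injective (fun n : ℕ => δ + ((n : ℝ) * d) • γ) := by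
      intro n k h
      simp only [add_right_inj] at h
      have h1 := smul_left_injective ℝ (hne γ hγ) h
      have h2 := mul_right_cancel₀ hd0 h1
      exact_mod_cast h2
    exact Set.infinite_of_injective_forall_mem hinj hmem Φ.finite_toSet
  rw [← sub_eq_zero]
  rw [← Module.forall_dual_apply_eq_zero_iff ℝ]
  intro f
  have hf : f ∈ Submodule.span ℝ (Φ : Set (A →ₗ[ℝ] ℝ)) := by rw [hspan]; trivial
  induction hf using Submodule.span_induction with
  | mem x hx => rw [map_sub, key x hx, sub_self]
  | zero => rfl
  | add x y _ _ hx hy => rw [LinearMap.add_apply, hx, hy, add_zero]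
  | smul a x _ hx => rw [LinearMap.smul_apply, hx, smul_zero]

theorem affRoots_reflSys {A : Type*} [NormedAddCommGroup A] [NormedSpace ℝ A]
    [FiniteDimensional ℝ A]
    (Φ : Finset (A →ₗ[ℝ] ℝ)) (cor : (A →ₗ[ℝ] ℝ) → A)
    (hne : ∀ α ∈ Φ, α ≠ (0 : A →ₗ[ℝ] ℝ))
    (hspan : Submodule.span ℝ (Φ : Set (A →ₗ[ℝ] ℝ)) = ⊤)
    (hcor : ∀ α ∈ Φ, α (cor α) = 2)
    (hcrys : ∀ α ∈ Φ, ∀ β ∈ Φ, ∃ m : ℤ, β (cor α) = (m : ℝ))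
    (hinv : ∀ α ∈ Φ, ∀ β ∈ Φ, β - β (cor α) • α ∈ Φ) :
    ReflSys (affRoots Φ) (affRefl Φ cor) := by
  have hclos : ∀ α ∈ Φ, ∀ m : ℤ, ∀ β ∈ Φ, ∀ n : ℤ, ∃ k : ℤ,
      (fun x => β x + (n : ℝ)) ∘ affRefl Φ cor (fun x => α x + (m : ℝ)) =
        fun x => (β - β (cor α) • α) x + (k : ℝ) := by
    intro α hα m β hβ n
    obtain ⟨j, hj⟩ := hcrys α hα β hβ
    refine ⟨n - m * j, ?_⟩
    funext x
    simp only [Function.comp, affRefl_apply Φ cor _ α hα m rfl, map_sub, map_smul,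
      LinearMap.sub_apply, LinearMap.smul_apply, smul_eq_mul, hj]
    push_cast
    ring
  have hcorefl : ∀ α ∈ Φ, ∀ β ∈ Φ, cor (β - β (cor α) • α) = cor β - α (cor β) • cor α := by
    intro α hα β hβ
    refine coroot_unique Φ cor hne hspan hcor hinv _ (hinv α hα β hβ) _ ?_ ?_
    · simp only [map_sub, map_smul, LinearMap.sub_apply, LinearMap.smul_apply, smul_eq_mul,
        hcor α hα, hcor β hβ]
      ring
    · intro δ hδ
      have h1 := hinv α hα _ (hinv β hβ _ (hinv α hα δ hδ))
      convert h1 using 1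
      ext x
      simp only [map_sub, map_smul, LinearMap.sub_apply, LinearMap.smul_apply, smul_eq_mul,
        hcor α hα]
      ring
  refine ⟨?_, ?_, ?_, ?_, ?_, ?_, ?_, ?_, ?_, ?_⟩
  · rintro _ ⟨α, hα, m, rfl⟩ _ ⟨β, hβ, n, rfl⟩
    obtain ⟨k, hk⟩ := hclos α hα m β hβ n
    exact ⟨_, hinv α hα β hβ, k, hk⟩
  · rintro _ ⟨α, hα, m, rfl⟩ _ ⟨β, hβ, n, rfl⟩
    obtain ⟨k, hk⟩ := hclos α hα m β hβ n
    funext x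
    rw [affRefl_apply Φ cor _ _ (hinv α hα β hβ) k hk]
    have hkx := congrFun hk x
    simp only [Function.comp] at hkx ⊢
    rw [← hkx, hcorefl α hα β hβ]
    simp only [affRefl_apply Φ cor _ α hα m rfl, affRefl_apply Φ cor _ β hβ n rfl, map_sub,
      map_smul, smul_eq_mul, hcor α hα]
    module
  · rintro _ ⟨α, hα, m, rfl⟩ x
    simp only [affRefl_apply Φ cor _ α hα m rfl, map_sub, map_smul, smul_eq_mul, hcor α hα]
    module
  · rintro _ ⟨α, hα, m, rfl⟩ x
    simp only [affRefl_apply Φ cor _ α hα m rfl, map_sub, map_smul, smul_eq_mul, hcor α hα]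
    ring
  · rintro _ ⟨α, hα, m, rfl⟩ _ ⟨β, hβ, n, rfl⟩
    refine ⟨β (cor α), fun x => ?_⟩
    simp only [affRefl_apply Φ cor _ α hα m rfl, map_sub, map_smul, smul_eq_mul]
    ring
  · rintro _ ⟨α, hα, m, rfl⟩ x hx
    simp only at hx
    rw [affRefl_apply Φ cor _ α hα m rfl, hx, zero_smul, sub_zero]
  · intro x y
    have hfin : (⋃ α ∈ (Φ : Set (A →ₗ[ℝ] ℝ)), (fun m : ℤ => (fun x => α x + (m : ℝ) : A → ℝ)) ''
        Set.Icc (-⌈|α x| + |α y|⌉) ⌈|α x| + |α y|⌉).Finite :=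
      Φ.finite_toSet.biUnion (fun α _ => (Set.finite_Icc _ _).image _)
    refine hfin.subset ?_
    rintro _ ⟨⟨α, hα, m, rfl⟩, h⟩
    simp only [Set.mem_iUnion]
    refine ⟨α, hα, m, ?_, rfl⟩
    have hc := Int.le_ceil (|α x| + |α y|)
    have a1 := neg_abs_le (α x)
    have a2 := le_abs_self (α x)
    have a3 := neg_abs_le (α y)
    have a4 := le_abs_self (α y)
    have a5 := abs_nonneg (α x)
    have a6 := abs_nonneg (α y)
    constructor
    · have : ((-⌈|α x| + |α y|⌉ : ℤ) : ℝ) ≤ m := by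
        push_cast
        rcases mul_neg_iff.1 h with h | h <;> linarith [h.1, h.2]
      exact_mod_cast this
    · have : (m : ℝ) ≤ ((⌈|α x| + |α y|⌉ : ℤ) : ℝ) := by
        rcases mul_neg_iff.1 h with h | h <;> linarith [h.1, h.2]
      exact_mod_cast this
  · rintro _ ⟨α, hα, m, rfl⟩
    refine ⟨-α, ?_, -m, ?_⟩
    · have := hinv α hα α hα
      rw [hcor α hα] at this
      convert this using 1
      module
    · funext x
      simp only [Pi.neg_apply, LinearMap.neg_apply]
      push_cast
      ring
  · rintro _ ⟨α, hα, m, rfl⟩ _ ⟨β, hβ, n, rfl⟩ t ht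
    have h0 := ht 0
    simp only [map_zero, zero_add] at h0
    have hlin : β = t • α := by
      ext x
      have := ht x
      simp only [LinearMap.smul_apply, smul_eq_mul]
      linarith
    have hc : cor α = t • cor β := by
      refine coroot_unique Φ cor hne hspan hcor hinv α hα _ ?_ ?_
      · have := hcor β hβ
        rw [map_smul]
        nth_rewrite 1 [hlin] at this
        simpa using this
      · intro δ hδ
        have := hinv β hβ δ hδ
        convert this using 2
        rw [map_smul, smul_eq_mul]
        nth_rewrite 3 [hlin]
        module
    funext x
    rw [affRefl_apply Φ cor _ α hα m rfl, affRefl_apply Φ cor _ β hβ n rfl,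
      show β x + (n : ℝ) = t * (α x + (m : ℝ)) from ht x, hc]
    module
  · classical
    let b := Module.finBasis ℝ A
    refine ⟨insert 0 (Finset.univ.image b), ?_⟩
    rintro _ ⟨α, hα, m, rfl⟩ _ ⟨β, hβ, n, rfl⟩ t ht
    have h0 := ht 0 (by simp)
    simp only [map_zero, zero_add] at h0
    have hlin : β = t • α := by
      refine b.ext (fun i => ?_)
      have := ht (b i) (by simp)
      simp only [LinearMap.smul_apply, smul_eq_mul]
      linarith
    intro x
    rw [hlin, h0]
    simp only [LinearMap.smul_apply, smul_eq_mul]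
    ring

theorem small_pert {A : Type*} [NormedAddCommGroup A] [NormedSpace ℝ A]
    (Φ : Finset (A →ₗ[ℝ] ℝ)) (z u : A) :
    ∀ᶠ t in nhdsWithin (0 : ℝ) (Set.Ioi 0), ∀ α ∈ Φ, ∀ m : ℤ, α z + (m : ℝ) ≠ 0 →
      0 < (α z + (m : ℝ)) * (α (z + t • u) + (m : ℝ)) := by
  rw [Filter.eventually_all_finset]
  intro α _
  obtain ⟨d, hd, hdm⟩ : ∃ d : ℝ, 0 < d ∧ ∀ m : ℤ, α z + (m : ℝ) ≠ 0 → d ≤ |α z + (m : ℝ)| := by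
    by_cases h : α z = round (α z)
    · refine ⟨1, one_pos, fun m hm => ?_⟩
      rw [h] at hm ⊢
      have h1 : (round (α z) + m : ℤ) ≠ 0 := by
        intro h2; apply hm; exact_mod_cast h2
      have := Int.one_le_abs h1
      exact_mod_cast this
    · refine ⟨|α z - round (α z)|, abs_pos.2 (sub_ne_zero.2 h), fun m _ => ?_⟩
      have := round_le (α z) (-m)
      push_cast at this
      rwa [sub_neg_eq_add] at this
  have hcont : Filter.Tendsto (fun t : ℝ => |t * α u|) (nhdsWithin (0 : ℝ) (Set.Ioi 0))
      (nhds 0) := by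
    have : Continuous (fun t : ℝ => |t * α u|) := by fun_prop
    have h := this.tendsto 0
    simp only [zero_mul, abs_zero] at h
    exact h.mono_left nhdsWithin_le_nhds
  filter_upwards [hcont.eventually_lt_const hd] with t ht m hm
  have h1 := lt_of_lt_of_le ht (hdm m hm)
  rw [map_add, map_smul, smul_eq_mul]
  rcases lt_or_gt_of_ne hm with h | h
  · rw [abs_of_neg h] at h1
    have := (abs_lt.1 h1).2
    exact mul_pos_of_neg_of_neg h (by linarith)
  · rw [abs_of_pos h] at h1
    have := (abs_lt.1 h1).1
    exact mul_pos h (by linarith)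

theorem affWeyl_word {A : Type*} [NormedAddCommGroup A] [NormedSpace ℝ A]
    (Φ : Finset (A →ₗ[ℝ] ℝ)) (cor : (A →ₗ[ℝ] ℝ) → A)
    (hcor : ∀ α ∈ Φ, α (cor α) = 2) (g : A ≃ᵃ[ℝ] A) (hg : g ∈ affWeyl Φ cor) :
    ∃ l : List (A → ℝ), (∀ a ∈ l, a ∈ affRoots Φ) ∧ ⇑g = wordMap (affRefl Φ cor) l := by
  induction hg using Subgroup.closure_induction'' with
  | one => exact ⟨[], by simp, rfl⟩
  | mem g hg =>
    obtain ⟨α, hα, m, h⟩ := hg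
    refine ⟨[fun x => α x + (m : ℝ)], by simpa using ⟨α, hα, m, rfl⟩, ?_⟩
    funext x
    simp only [wordMap, Function.comp, id, affRefl_apply Φ cor _ α hα m rfl, h]
  | inv_mem g hg =>
    obtain ⟨α, hα, m, h⟩ := hg
    refine ⟨[fun x => α x + (m : ℝ)], by simpa using ⟨α, hα, m, rfl⟩, ?_⟩
    funext x
    simp only [wordMap, Function.comp, id, affRefl_apply Φ cor _ α hα m rfl]
    rw [← h]
    have h2 : g (g x) = x := by
      rw [h, h]
      simp only [map_sub, map_smul, smul_eq_mul, hcor α hα]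
      module
    apply g.injective
    rw [h2]
    simp [AffineEquiv.inv_def]
  | mul g h _ _ ih1 ih2 =>
    obtain ⟨l1, h1, e1⟩ := ih1
    obtain ⟨l2, h2, e2⟩ := ih2
    refine ⟨l1 ++ l2, ?_, ?_⟩
    · intro x hx
      rcases List.mem_append.1 hx with h | h
      · exact h1 x h
      · exact h2 x h
    · rw [wordMap_append, ← e1, ← e2]; rfl

theorem affWeyl_fix {A : Type*} [NormedAddCommGroup A] [NormedSpace ℝ A]
    [FiniteDimensional ℝ A]
    (Φ : Finset (A →ₗ[ℝ] ℝ)) (cor : (A →ₗ[ℝ] ℝ) → A)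
    (hne : ∀ α ∈ Φ, α ≠ (0 : A →ₗ[ℝ] ℝ))
    (hspan : Submodule.span ℝ (Φ : Set (A →ₗ[ℝ] ℝ)) = ⊤)
    (hcor : ∀ α ∈ Φ, α (cor α) = 2)
    (hcrys : ∀ α ∈ Φ, ∀ β ∈ Φ, ∃ m : ℤ, β (cor α) = (m : ℝ))
    (hinv : ∀ α ∈ Φ, ∀ β ∈ Φ, β - β (cor α) • α ∈ Φ)
    (g : A ≃ᵃ[ℝ] A) (hg : g ∈ affWeyl Φ cor) (x : A)
    (hx : ∀ α ∈ Φ, ∀ m : ℤ, 0 ≤ (α x + (m : ℝ)) * (α (g x) + (m : ℝ))) : g x = x := by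
  have H := affRoots_reflSys Φ cor hne hspan hcor hcrys hinv
  obtain ⟨l, hl, hgl⟩ := affWeyl_word Φ cor hcor g hg
  obtain ⟨u, hu⟩ : ∃ u : A, ∀ α : Φ, (α : A →ₗ[ℝ] ℝ) u ≠ 0 := by
    refine Module.Dual.exists_forall_ne_zero_of_forall_exists
      (fun α : Φ => (α : A →ₗ[ℝ] ℝ)) (fun α => ?_)
    by_contra h
    push Not at h
    exact hne α α.2 (LinearMap.ext h)
  set z : A := (1 / 2 : ℝ) • (x + g x) with hz
  obtain ⟨t, ht, htpos⟩ := ((small_pert Φ z u).and self_mem_nhdsWithin).exists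
  have htpos : 0 < t := htpos
  have hzα : ∀ α : A →ₗ[ℝ] ℝ, ∀ m : ℤ,
      α z + (m : ℝ) = ((α x + (m : ℝ)) + (α (g x) + (m : ℝ))) / 2 := by
    intro α m
    rw [hz, map_smul, map_add, smul_eq_mul]; ring
  have hreg : ∀ f ∈ affRoots Φ, f (z + t • u) ≠ 0 := by
    rintro _ ⟨α, hα, m, rfl⟩
    by_cases h : α z + (m : ℝ) = 0
    · simp only [map_add, map_smul, smul_eq_mul]
      have := mul_ne_zero htpos.ne' (hu ⟨α, hα⟩)
      intro h2
      apply this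
      simp only
      linarith
    · have := ht α hα m h
      intro h2
      simp only at h2
      rw [h2] at this
      simp at this
  have hsign : ∀ f ∈ affRoots Φ, 0 < f (z + t • u) → 0 ≤ f x ∧ 0 ≤ f (g x) := by
    rintro _ ⟨α, hα, m, rfl⟩ hp
    simp only at hp ⊢
    have h1 := hx α hα m
    have h2 := hzα α m
    by_cases h : α z + (m : ℝ) = 0
    · rw [h] at h2
      have h3 : α (g x) + (m : ℝ) = - (α x + (m : ℝ)) := by linarith
      rw [h3] at h1
      have h4 : α x + (m : ℝ) = 0 := by nlinarith
      constructor <;> linarith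
    · have h3 := ht α hα m h
      have h4 : 0 < α z + (m : ℝ) := (pos_iff_pos_of_mul_pos h3).2 hp
      constructor
      · by_contra h5
        nlinarith
      · by_contra h5
        nlinarith
  rw [hgl]
  refine refl_word_fix H hreg x (fun f hf h => (hsign f hf h).1) l hl (fun f hf h => ?_)
  rw [← hgl]
  exact (hsign f hf h).2

theorem vertex_singleton {A : Type*} [NormedAddCommGroup A] [NormedSpace ℝ A]
    [FiniteDimensional ℝ A] (pos : Finset (A →ₗ[ℝ] ℝ)) (V : Set A) (h : IsVertexFace pos V) :
    ∃ v, V = {v} := by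
  obtain ⟨⟨⟨v, hv⟩, _⟩, h0⟩ := h
  refine ⟨v, Set.eq_singleton_iff_unique_mem.2 ⟨hv, fun w hw => ?_⟩⟩
  have hbot : (affineSpan ℝ V).direction = ⊥ := Submodule.finrank_eq_zero.1 h0
  have : w -ᵥ v ∈ (affineSpan ℝ V).direction :=
    AffineSubspace.vsub_mem_direction (subset_affineSpan ℝ V hw) (subset_affineSpan ℝ V hv)
  rw [hbot, Submodule.mem_bot] at this
  exact sub_eq_zero.1 this

theorem face_sign {A : Type*} [NormedAddCommGroup A] [NormedSpace ℝ A]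
    (Φ pos : Finset (A →ₗ[ℝ] ℝ))
    (hsplit : ∀ α ∈ Φ, α ∈ pos ∨ -α ∈ pos) (F : Set A) (hF : IsFace pos F) (x y : A)
    (hx : x ∈ F) (hy : y ∈ F) (α : A →ₗ[ℝ] ℝ) (hα : α ∈ Φ) (m : ℤ) :
    0 ≤ (α x + (m : ℝ)) * (α y + (m : ℝ)) := by
  obtain ⟨_, σ, rfl⟩ := hF
  have key : ∀ β ∈ pos, ∀ n : ℤ, 0 ≤ (β x + (n : ℝ)) * (β y + (n : ℝ)) := by
    intro β hβ n
    simp only [Set.mem_iInter] at hx hy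
    have h1 := hx β hβ n
    have h2 := hy β hβ n
    unfold halfChoice at h1 h2
    split_ifs at h1 h2
    · have h1 : β x + (n : ℝ) = 0 := h1
      rw [h1, zero_mul]
    · exact mul_nonneg h1 h2
    · exact mul_nonneg_of_nonpos_of_nonpos h1 h2
  rcases hsplit α hα with h | h
  · exact key α h m
  · have := key (-α) h (-m)
    simp only [LinearMap.neg_apply] at this
    push_cast at this
    linarith

theorem dominant_fix {A : Type*} [NormedAddCommGroup A] [NormedSpace ℝ A]
    [FiniteDimensional ℝ A]
    (Φ pos : Finset (A →ₗ[ℝ] ℝ)) (cor : (A →ₗ[ℝ] ℝ) → A)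
    (hne : ∀ α ∈ Φ, α ≠ (0 : A →ₗ[ℝ] ℝ))
    (hspan : Submodule.span ℝ (Φ : Set (A →ₗ[ℝ] ℝ)) = ⊤)
    (hsplit : ∀ α ∈ Φ, α ∈ pos ∨ -α ∈ pos)
    (hcor : ∀ α ∈ Φ, α (cor α) = 2)
    (hcrys : ∀ α ∈ Φ, ∀ β ∈ Φ, ∃ m : ℤ, β (cor α) = (m : ℝ))
    (hinv : ∀ α ∈ Φ, ∀ β ∈ Φ, β - β (cor α) • α ∈ Φ)
    (g : A ≃ᵃ[ℝ] A) (hg : g ∈ affWeyl Φ cor) (v : A) (hv : g v = v) (u w : A)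
    (hu : u ∈ domChamber pos) (hw : w ∈ domChamber pos) (hgu : g (v + u) = v + w) : w = u := by
  obtain ⟨t, ⟨h1, h2⟩, htpos⟩ :=
    (((small_pert Φ v u).and (small_pert Φ v w)).and self_mem_nhdsWithin).exists
  have htpos : 0 < t := htpos
  have hlin : ∀ y, g (v + y) = v + g.linear y := by
    intro y
    have := g.map_vadd v y
    rw [hv] at this
    simpa [add_comm] using this
  have hgu' : g.linear u = w := by
    have := hlin u
    rw [hgu] at this
    exact (add_left_cancel this).symm
  have hgt : g (v + t • u) = v + t • w := by rw [hlin, map_smul, hgu']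
  have hfix := affWeyl_fix Φ cor hne hspan hcor hcrys hinv g hg (v + t • u) (by
    intro α hα m
    rw [hgt]
    by_cases h : α v + (m : ℝ) = 0
    · have e : ∀ y : A, α (v + t • y) + (m : ℝ) = t * α y := by
        intro y
        rw [map_add, map_smul, smul_eq_mul]; linarith
      rw [e, e]
      have : 0 ≤ α u * α w := by
        rcases hsplit α hα with h3 | h3
        · exact mul_nonneg (hu α h3) (hw α h3)
        · have := mul_nonneg (hu _ h3) (hw _ h3)
          simpa using this
      have := mul_nonneg (mul_self_nonneg t) this
      linarith
    · have e1 := h1 α hα m h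
      have e2 := h2 α hα m h
      have e3 := mul_pos e1 e2
      have e4 := mul_self_pos.2 h
      by_contra hc
      nlinarith)
  rw [hgt] at hfix
  exact smul_right_injective A htpos.ne' (add_left_cancel hfix)

end concreteRefl

/-- Two one-skeleton galleries with the same special source and componentwise
the same types, both minimal relative to the dominant Weyl chamber `C⁺`, are equal. -/
theorem statement7 {A : Type*} [NormedAddCommGroup A] [NormedSpace ℝ A]
    [FiniteDimensional ℝ A]
    (Φ pos : Finset (A →ₗ[ℝ] ℝ)) (cor : (A →ₗ[ℝ] ℝ) → A)
    -- `Φ` is a finite crystallographic root system of linear functionals spanning the dual,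
    -- with positive system `pos` and coroots `cor`:
    (hne : ∀ α ∈ Φ, α ≠ (0 : A →ₗ[ℝ] ℝ))
    (hspan : Submodule.span ℝ (Φ : Set (A →ₗ[ℝ] ℝ)) = ⊤)
    (hpos : pos ⊆ Φ)
    (hsplit : ∀ α ∈ Φ, α ∈ pos ∨ -α ∈ pos)
    (hnotboth : ∀ α ∈ pos, -α ∉ pos)
    (hcor : ∀ α ∈ Φ, α (cor α) = 2)
    (hcrys : ∀ α ∈ Φ, ∀ β ∈ Φ, ∃ m : ℤ, β (cor α) = (m : ℝ))
    (hinv : ∀ α ∈ Φ, ∀ β ∈ Φ, β - β (cor α) • α ∈ Φ)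
    -- a fixed special vertex `V_0`:
    (V0 : Set A) (hV0 : IsVertexFace pos V0) (hV0sp : ∀ x ∈ V0, IsSpecialPt Φ x)
    -- two galleries with source `V_0` and the same type:
    {r : ℕ} (δ' δ'' : OneSkelGallery A Φ pos r)
    (hsrc' : δ'.V 0 = V0) (hsrc'' : δ''.V 0 = V0)
    (htypeV : ∀ i, SameType Φ cor (δ'.V i) (δ''.V i))
    (htypeE : ∀ i, SameType Φ cor (δ'.E i) (δ''.E i))
    -- both minimal relative to the dominant Weyl chamber:
    (hmin' : ∀ i : Fin (r + 1), δ'.E i ⊆ δ'.V i.castSucc + domChamber pos)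
    (hmin'' : ∀ i : Fin (r + 1), δ''.E i ⊆ δ''.V i.castSucc + domChamber pos) :
    δ' = δ'' := by
  have hvert : ∀ F : Set A, ∀ x y : A, IsFace pos F → x ∈ F → y ∈ F →
      ∀ g ∈ affWeyl Φ cor, g x = y → y = x := by
    intro F x y hF hx hy g hg hgx
    rw [← hgx]
    refine affWeyl_fix Φ cor hne hspan hcor hcrys hinv g hg x (fun α hα m => ?_)
    rw [hgx]
    exact face_sign Φ pos hsplit F hF x y hx hy α hα m
  have step : ∀ i : Fin (r + 1), δ'.V i.castSucc = δ''.V i.castSucc →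
      δ'.E i = δ''.E i ∧ δ'.V i.succ = δ''.V i.succ := by
    intro i hi
    obtain ⟨v, hv⟩ := vertex_singleton pos _ (δ'.vertex_V i.castSucc)
    have hv2 : δ''.V i.castSucc = {v} := by rw [← hi, hv]
    have hE : δ'.E i = δ''.E i := by
      obtain ⟨g, hg, hgE⟩ := htypeE i
      have hvE : v ∈ δ'.E i := δ'.subset_left i (by rw [hv]; rfl)
      have hvE2 : v ∈ δ''.E i := δ''.subset_left i (by rw [hv2]; rfl)
      have hgvE : g v ∈ δ''.E i := by rw [← hgE]; exact ⟨v, hvE, rfl⟩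
      have hgv : g v = v := hvert _ v (g v) (δ''.edge_E i).1 hvE2 hgvE g hg rfl
      have hfix : ∀ x ∈ δ'.E i, g x = x := by
        intro x hx
        have h1 := hmin' i hx
        have h2 := hmin'' i (show g x ∈ δ''.E i by rw [← hgE]; exact ⟨x, hx, rfl⟩)
        rw [hv, Set.singleton_add] at h1
        rw [hv2, Set.singleton_add] at h2
        obtain ⟨u, hu, hux⟩ := h1
        obtain ⟨w, hw, hwx⟩ := h2
        simp only at hux hwx
        have := dominant_fix Φ pos cor hne hspan hsplit hcor hcrys hinv g hg v hgv u w hu hw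
          (by rw [hux, hwx])
        rw [← hwx, this, hux]
      rw [← hgE]
      ext x
      constructor
      · intro hx; exact ⟨x, hx, hfix x hx⟩
      · rintro ⟨y, hy, rfl⟩; rw [hfix y hy]; exact hy
    refine ⟨hE, ?_⟩
    obtain ⟨a, ha⟩ := vertex_singleton pos _ (δ'.vertex_V i.succ)
    obtain ⟨b, hb⟩ := vertex_singleton pos _ (δ''.vertex_V i.succ)
    obtain ⟨g, hg, hgV⟩ := htypeV i.succ
    rw [ha, hb, Set.image_singleton, Set.singleton_eq_singleton_iff] at hgV
    have haE : a ∈ δ''.E i := by rw [← hE]; exact δ'.subset_right i (by rw [ha]; rfl)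
    have hbE : b ∈ δ''.E i := δ''.subset_right i (by rw [hb]; rfl)
    rw [ha, hb, hvert _ a b (δ''.edge_E i).1 haE hbE g hg hgV]
  have hV : ∀ i, δ'.V i = δ''.V i := by
    intro i
    induction i using Fin.induction with
    | zero => rw [hsrc', hsrc'']
    | succ i ih => exact (step i ih).2
  have hE : ∀ i, δ'.E i = δ''.E i := fun i => (step i (hV _)).1
  have hV' := funext hV
  have hE' := funext hE
  cases δ'
  cases δ''
  simp only at hV' hE'
  subst hV'
  subst hE'
  rfl
end

section
/- Let V be a vertex of 𝔸, let C be a closed Weyl chamber, and let E, E' be edges of 𝔸 with V ⊆ E, V ⊆ E', E ⊆ V + C and E' ⊆ V + C. If E and E' have the same type (i.e. lie in the same orbit of the affine Weyl group W^a), then E = E'. (This is the key step in the paper's uniqueness proof: a sector contains at most one edge of each type emanating from its vertex.) -/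
open Pointwise

variable {A : Type*} [NormedAddCommGroup A] [NormedSpace ℝ A]

section helpers

/-- affine root -/
def af (i : (A →ₗ[ℝ] ℝ) × ℤ) (x : A) : ℝ := i.1 x + (i.2 : ℝ)

/-- affine reflection -/
def sr (cor : (A →ₗ[ℝ] ℝ) → A) (i : (A →ₗ[ℝ] ℝ) × ℤ) (x : A) : A := x - af i x • cor i.1

/-- action of a word -/
def act (cor : (A →ₗ[ℝ] ℝ) → A) (l : List ((A →ₗ[ℝ] ℝ) × ℤ)) (x : A) : A :=
  l.foldr (fun i z => sr cor i z) x

/-- invariant form -/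
def bf (Φ : Finset (A →ₗ[ℝ] ℝ)) (x y : A) : ℝ := ∑ α ∈ Φ, α x * α y

/-- root system properties -/
structure RS (Φ : Finset (A →ₗ[ℝ] ℝ)) (cor : (A →ₗ[ℝ] ℝ) → A) : Prop where
  span : Submodule.span ℝ (Φ : Set (A →ₗ[ℝ] ℝ)) = ⊤
  cor2 : ∀ α ∈ Φ, α (cor α) = 2
  crys : ∀ α ∈ Φ, ∀ β ∈ Φ, ∃ m : ℤ, β (cor α) = (m : ℝ)
  inv : ∀ α ∈ Φ, ∀ β ∈ Φ, β - β (cor α) • α ∈ Φ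

/-- simple affine roots relative to `p` -/
def Simp (Φ : Finset (A →ₗ[ℝ] ℝ)) (cor : (A →ₗ[ℝ] ℝ) → A) (p : A)
    (i : (A →ₗ[ℝ] ℝ) × ℤ) : Prop :=
  i.1 ∈ Φ ∧ ∀ j : (A →ₗ[ℝ] ℝ) × ℤ, j.1 ∈ Φ → af j p * af j (sr cor i p) < 0 →
    ∀ x, sr cor j x = sr cor i x

variable {Φ : Finset (A →ₗ[ℝ] ℝ)} {cor : (A →ₗ[ℝ] ℝ) → A}

lemma act_cons (i : (A →ₗ[ℝ] ℝ) × ℤ) (l : List ((A →ₗ[ℝ] ℝ) × ℤ)) (x : A) :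
    act cor (i :: l) x = sr cor i (act cor l x) := rfl

lemma act_append (l l' : List ((A →ₗ[ℝ] ℝ) × ℤ)) (x : A) :
    act cor (l ++ l') x = act cor l (act cor l' x) := by
  simp [act, List.foldr_append]

lemma af_sr (i j : (A →ₗ[ℝ] ℝ) × ℤ) (x : A) :
    af j (sr cor i x) = af j x - af i x * j.1 (cor i.1) := by
  simp only [af, sr, map_sub, map_smul, smul_eq_mul]; ring

lemma af_sr_self (h : RS Φ cor) {i : (A →ₗ[ℝ] ℝ) × ℤ} (hi : i.1 ∈ Φ) (x : A) :
    af i (sr cor i x) = - af i x := by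
  rw [af_sr, h.cor2 _ hi]; ring

lemma sr_sr (h : RS Φ cor) {i : (A →ₗ[ℝ] ℝ) × ℤ} (hi : i.1 ∈ Φ) (x : A) :
    sr cor i (sr cor i x) = x := by
  have := af_sr_self h hi x
  rw [sr, this, sr]; module

lemma bf_comm (x y : A) : bf Φ x y = bf Φ y x := by
  simp [bf, mul_comm]

lemma bf_add_left (x y z : A) : bf Φ (x + y) z = bf Φ x z + bf Φ y z := by
  simp [bf, add_mul, Finset.sum_add_distrib]

lemma bf_smul_left (c : ℝ) (x z : A) : bf Φ (c • x) z = c * bf Φ x z := by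
  simp [bf, Finset.mul_sum, mul_assoc]

lemma bf_sub_left (x y z : A) : bf Φ (x - y) z = bf Φ x z - bf Φ y z := by
  simp [bf, sub_mul, Finset.sum_sub_distrib]

lemma bf_sub_right (x y z : A) : bf Φ z (x - y) = bf Φ z x - bf Φ z y := by
  rw [bf_comm, bf_sub_left, bf_comm x, bf_comm y]

lemma bf_smul_right (c : ℝ) (x z : A) : bf Φ z (c • x) = c * bf Φ z x := by
  rw [bf_comm, bf_smul_left, bf_comm]

lemma bf_nonneg (x : A) : 0 ≤ bf Φ x x :=
  Finset.sum_nonneg fun _ _ => mul_self_nonneg _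

lemma bf_eq_zero [FiniteDimensional ℝ A] (h : RS Φ cor) {x : A} (hx : bf Φ x x = 0) : x = 0 := by
  have h1 : ∀ α ∈ Φ, α x = 0 := by
    intro α hα
    have := (Finset.sum_eq_zero_iff_of_nonneg
      (f := fun α : A →ₗ[ℝ] ℝ => α x * α x) (fun _ _ => mul_self_nonneg _)).1 hx α hα
    simpa using this
  have h2 : ∀ f : A →ₗ[ℝ] ℝ, f x = 0 := by
    intro f
    have hf : f ∈ Submodule.span ℝ (Φ : Set (A →ₗ[ℝ] ℝ)) := by rw [h.span]; trivial
    induction hf using Submodule.span_induction with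
    | mem f hf => exact h1 f hf
    | zero => simp
    | add f g _ _ hf hg => simp [hf, hg]
    | smul c f _ hf => simp [hf]
  exact (Module.forall_dual_apply_eq_zero_iff ℝ x).1 h2

/-- linear reflection invariance -/
lemma bf_inv (h : RS Φ cor) {β : A →ₗ[ℝ] ℝ} (hβ : β ∈ Φ) (x y : A) :
    bf Φ (x - β x • cor β) (y - β y • cor β) = bf Φ x y := by
  unfold bf
  have h2 := h.cor2 β hβ
  refine Finset.sum_nbij' (fun α => α - α (cor β) • β) (fun α => α - α (cor β) • β)
    (fun α hα => h.inv β hβ α hα) (fun α hα => h.inv β hβ α hα) ?_ ?_ ?_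
  · intro α _
    ext z
    simp [h2]; ring
  · intro α _
    ext z
    simp [h2]; ring
  · intro α _
    simp
    ring

lemma bf_cor (h : RS Φ cor) {β : A →ₗ[ℝ] ℝ} (hβ : β ∈ Φ) (y : A) :
    2 * bf Φ (cor β) y = β y * bf Φ (cor β) (cor β) := by
  have h1 := bf_inv h hβ (cor β) y
  rw [h.cor2 β hβ] at h1
  simp only [bf_sub_left, bf_sub_right, bf_smul_left, bf_smul_right] at h1
  linarith

lemma cor_ne (h : RS Φ cor) {β : A →ₗ[ℝ] ℝ} (hβ : β ∈ Φ) : cor β ≠ 0 := by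
  intro h0
  have := h.cor2 β hβ
  rw [h0] at this; simp at this

variable [FiniteDimensional ℝ A]

lemma bf_pos (h : RS Φ cor) {β : A →ₗ[ℝ] ℝ} (hβ : β ∈ Φ) : 0 < bf Φ (cor β) (cor β) :=
  lt_of_le_of_ne (bf_nonneg _) fun h0 => cor_ne h hβ (bf_eq_zero h h0.symm)

lemma cor_refl (h : RS Φ cor) {α β : A →ₗ[ℝ] ℝ} (hα : α ∈ Φ) (hβ : β ∈ Φ) :
    cor (α - α (cor β) • β) = cor α - β (cor α) • cor β := by
  set γ := α - α (cor β) • β with hγ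
  have hγΦ : γ ∈ Φ := h.inv β hβ α hα
  set z := cor α - β (cor α) • cor β with hz
  have hQz : bf Φ z z = bf Φ (cor α) (cor α) := bf_inv h hβ _ _
  have hzB : ∀ y, 2 * bf Φ z y = γ y * bf Φ (cor α) (cor α) := by
    intro y
    have h2 := h.cor2 β hβ
    have e : y = (y - β y • cor β) - β (y - β y • cor β) • cor β := by
      simp [h2]; module
    have h1 := bf_inv h hβ (cor α) (y - β y • cor β)
    rw [← e] at h1
    rw [hz, h1, bf_cor h hα]
    simp [hγ]; ring_nf; simp
  have hQα := bf_pos h hα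
  have hγz : γ z = 2 := by
    have := hzB z
    rw [hQz] at this
    nlinarith
  have hp := bf_pos h hγΦ
  have e1 := bf_cor h hγΦ z
  have e2 := hzB (cor γ)
  rw [h.cor2 γ hγΦ] at e2
  rw [hγz] at e1
  rw [bf_comm] at e2
  have : bf Φ (cor γ - z) (cor γ - z) = 0 := by
    simp only [bf_sub_left, bf_sub_right]
    rw [bf_comm z (cor γ)]
    linarith
  exact sub_eq_zero.1 (bf_eq_zero h this)

/-- conjugation of an affine root by a reflection -/
lemma conj (h : RS Φ cor) {i j : (A →ₗ[ℝ] ℝ) × ℤ} (hi : i.1 ∈ Φ) (hj : j.1 ∈ Φ) :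
    ∃ k : (A →ₗ[ℝ] ℝ) × ℤ, k.1 ∈ Φ ∧ (∀ x, af k x = af j (sr cor i x)) ∧
      (∀ x, sr cor k x = sr cor i (sr cor j (sr cor i x))) ∧
      bf Φ (cor k.1) (cor k.1) = bf Φ (cor j.1) (cor j.1) := by
  obtain ⟨m, hm⟩ := h.crys i.1 hi j.1 hj
  have hk : ∀ x, af (j.1 - j.1 (cor i.1) • i.1, j.2 - i.2 * m) x = af j (sr cor i x) := by
    intro x
    rw [af_sr]
    simp [af, hm]; ring
  refine ⟨(j.1 - j.1 (cor i.1) • i.1, j.2 - i.2 * m), h.inv _ hi _ hj, hk, ?_, ?_⟩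
  · intro x
    rw [sr, hk]
    dsimp only
    rw [cor_refl h hj hi]
    set t := af j (sr cor i x) with ht
    rw [show sr cor j (sr cor i x) = sr cor i x - t • cor j.1 from rfl]
    have e : af i (sr cor i x - t • cor j.1) = - af i x - t * i.1 (cor j.1) := by
      have := af_sr_self h hi x
      simp only [af, map_sub, map_smul, smul_eq_mul] at this ⊢
      linarith
    rw [show sr cor i (sr cor i x - t • cor j.1) = (sr cor i x - t • cor j.1) -
      af i (sr cor i x - t • cor j.1) • cor i.1 from rfl, e, sr]
    module
  · dsimp only
    rw [cor_refl h hj hi]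
    exact bf_inv h hi _ _

/-- pull back of an affine root by a word -/
lemma conj_act (h : RS Φ cor) (l : List ((A →ₗ[ℝ] ℝ) × ℤ)) (hl : ∀ i ∈ l, i.1 ∈ Φ)
    {j : (A →ₗ[ℝ] ℝ) × ℤ} (hj : j.1 ∈ Φ) :
    ∃ k : (A →ₗ[ℝ] ℝ) × ℤ, k.1 ∈ Φ ∧ ∀ x, af k x = af j (act cor l x) := by
  induction l generalizing j with
  | nil => exact ⟨j, hj, fun x => rfl⟩
  | cons i l ih =>
    obtain ⟨k, hk, hk', -, -⟩ := conj h (hl i (by simp)) hj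
    obtain ⟨k2, hk2, hk2'⟩ := ih (fun i hi => hl i (by simp [hi])) hk
    exact ⟨k2, hk2, fun x => by rw [hk2', hk', act_cons]⟩

lemma exchange_s8 (h : RS Φ cor) {p : A} (hp : ∀ i : (A →ₗ[ℝ] ℝ) × ℤ, i.1 ∈ Φ → af i p ≠ 0)
    (l : List ((A →ₗ[ℝ] ℝ) × ℤ)) (hl : ∀ i ∈ l, Simp Φ cor p i)
    {i : (A →ₗ[ℝ] ℝ) × ℤ} (hi : i.1 ∈ Φ) (hs : af i p * af i (act cor l p) < 0) :
    ∃ l' : List ((A →ₗ[ℝ] ℝ) × ℤ), (∀ i ∈ l', Simp Φ cor p i) ∧ l'.length < l.length ∧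
      ∀ x, sr cor i (act cor l x) = act cor l' x := by
  induction l generalizing i with
  | nil =>
    exfalso
    have : act cor [] p = p := rfl
    rw [this] at hs
    nlinarith [mul_self_nonneg (af i p)]
  | cons t l ih =>
    have ht := hl t (by simp)
    have hl' : ∀ i ∈ l, Simp Φ cor p i := fun i hi => hl i (by simp [hi])
    by_cases hc : af i p * af i (sr cor t p) < 0
    · refine ⟨l, hl', by simp, fun x => ?_⟩
      rw [act_cons, ht.2 i hi hc, sr_sr h ht.1]
    · obtain ⟨k, hk, hk1, hk2, -⟩ := conj h ht.1 hi
      have h1 : af i (sr cor t p) ≠ 0 := by rw [← hk1]; exact hp k hk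
      have h0 := hp i hi
      have hpos : 0 < af i p * af i (sr cor t p) :=
        lt_of_le_of_ne (not_lt.1 hc) (Ne.symm (mul_ne_zero h0 h1))
      have hsep : af k p * af k (act cor l p) < 0 := by
        rw [hk1, hk1, ← act_cons]
        by_contra hcon
        push Not at hcon
        have := mul_nonneg hpos.le hcon
        have h3 : 0 < af i (sr cor t p) ^ 2 := by positivity
        nlinarith [mul_neg_of_neg_of_pos hs h3]
      obtain ⟨l', hl1, hl2, hl3⟩ := ih hl' hk hsep
      refine ⟨t :: l', ?_, by simpa using hl2, fun x => ?_⟩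
      · intro j hj
        rcases List.mem_cons.1 hj with rfl | hj
        · exact ht
        · exact hl1 j hj
      · rw [act_cons, act_cons, ← hl3, hk2, sr_sr h ht.1]

lemma word_fix_s8 (h : RS Φ cor) {p : A} (hp : ∀ i : (A →ₗ[ℝ] ℝ) × ℤ, i.1 ∈ Φ → af i p ≠ 0)
    {x y : A} (hx : ∀ i : (A →ₗ[ℝ] ℝ) × ℤ, i.1 ∈ Φ → 0 ≤ af i p * af i x)
    (hy : ∀ i : (A →ₗ[ℝ] ℝ) × ℤ, i.1 ∈ Φ → 0 ≤ af i p * af i y) (n : ℕ) :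
    ∀ l : List ((A →ₗ[ℝ] ℝ) × ℤ), l.length ≤ n → (∀ i ∈ l, Simp Φ cor p i) →
      act cor l x = y → x = y := by
  induction n with
  | zero =>
    intro l hl _ he
    have : l = [] := by simpa using hl
    subst this
    exact he
  | succ n ih =>
    intro l hl hS he
    cases l with
    | nil => exact he
    | cons s l =>
      have hs := hS s (by simp)
      have hl' : ∀ i ∈ l, Simp Φ cor p i := fun i hi => hS i (by simp [hi])
      have hlen : l.length ≤ n := by simpa using hl
      by_cases hc : af s p * af s (act cor (s :: l) p) < 0
      · apply ih l hlen hl'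
        obtain ⟨k, hk, hk'⟩ := conj_act h (s :: l) (fun i hi => (hS i hi).1) hs.1
        have h1 := hx k hk
        rw [hk', hk', he] at h1
        have h2 := hy s hs.1
        have h0 := hp s hs.1
        have h3 : af s y = 0 := by
          by_contra hne
          have h4 : 0 < af s y ^ 2 := by positivity
          have h5 := mul_nonneg h1 h2
          nlinarith [mul_neg_of_neg_of_pos hc h4]
        rw [act_cons] at he
        have h6 : sr cor s y = y := by simp [sr, h3]
        rw [← sr_sr h hs.1 (act cor l x), he, h6]
      · rw [act_cons, af_sr_self h hs.1] at hc
        obtain ⟨k, hk, hk'⟩ := conj_act h l (fun i hi => (hl' i hi).1) hs.1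
        have h1 : af s (act cor l p) ≠ 0 := by rw [← hk']; exact hp k hk
        have h0 := hp s hs.1
        have hne := mul_ne_zero h0 h1
        have hsep : af s p * af s (act cor l p) < 0 :=
          lt_of_le_of_ne (by linarith) hne
        obtain ⟨l', hl1, hl2, hl3⟩ := exchange_s8 h hp l hl' hs.1 hsep
        exact ih l' (by omega) hl1 (by rw [← hl3, ← act_cons, he])

lemma finite_depth (h : RS Φ cor) (p : A) (d : ℝ) :
    {i : (A →ₗ[ℝ] ℝ) × ℤ | i.1 ∈ Φ ∧ af i p ^ 2 * bf Φ (cor i.1) (cor i.1) ≤ d}.Finite := by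
  have h1 : ∀ α ∈ Φ, {m : ℤ | (α p + m) ^ 2 * bf Φ (cor α) (cor α) ≤ d}.Finite := by
    intro α hα
    have hq := bf_pos h hα
    set q := bf Φ (cor α) (cor α)
    refine (Set.finite_Icc (⌊- α p - (1 + d / q)⌋) (⌈- α p + (1 + d / q)⌉)).subset ?_
    intro m hm
    have hm1 : (α p + m) ^ 2 ≤ d / q := (le_div_iff₀ hq).2 hm
    constructor
    · have : (⌊- α p - (1 + d / q)⌋ : ℝ) ≤ m := (Int.floor_le _).trans (by nlinarith)
      exact_mod_cast this
    · have : (m : ℝ) ≤ ⌈- α p + (1 + d / q)⌉ := le_trans (by nlinarith) (Int.le_ceil _)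
      exact_mod_cast this
  refine (Φ.finite_toSet.biUnion (fun α hα => (h1 α hα).image (fun m => (α, m)))).subset ?_
  rintro ⟨α, m⟩ ⟨hα, hm⟩
  simp only [Set.mem_iUnion]
  exact ⟨α, hα, m, hm, rfl⟩

/-- depth descent -/
lemma descent (h : RS Φ cor) {p : A} (hp : ∀ i : (A →ₗ[ℝ] ℝ) × ℤ, i.1 ∈ Φ → af i p ≠ 0)
    {i j : (A →ₗ[ℝ] ℝ) × ℤ} (hi : i.1 ∈ Φ) (hj : j.1 ∈ Φ)
    (hne : ¬ ∀ x, sr cor j x = sr cor i x)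
    (hb : af j p * (af j p - af i p * j.1 (cor i.1) / 2) ≤ 0) :
    af j p ^ 2 * bf Φ (cor j.1) (cor j.1) < af i p ^ 2 * bf Φ (cor i.1) (cor i.1) ∧
    af i (sr cor j p) ^ 2 < af i p ^ 2 := by
  rw [af_sr]
  have ha0 := hp i hi
  have hb0 := hp j hj
  have hqa := bf_pos h hi
  have hqb := bf_pos h hj
  have e1 := bf_cor h hi (cor j.1)
  have e2 := bf_cor h hj (cor i.1)
  rw [bf_comm] at e2
  set Qa := bf Φ (cor i.1) (cor i.1)
  set Qb := bf Φ (cor j.1) (cor j.1)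
  set c := j.1 (cor i.1) with hc
  set c' := i.1 (cor j.1) with hc'
  have e3 : c' * Qa = c * Qb := by linarith
  have e4 : bf Φ (cor j.1 - (c' / 2) • cor i.1) (cor j.1 - (c' / 2) • cor i.1)
      = Qb * (1 - c * c' / 4) := by
    simp only [bf_sub_left, bf_sub_right, bf_smul_left, bf_smul_right]
    rw [bf_comm (cor j.1) (cor i.1)]
    linear_combination (-(c' / 2)) * e2 - (c'/2) * e1 / 2 * 0 + (c' / 4) * e3
  have hcc : c * c' ≤ 4 := by
    have := bf_nonneg (Φ := Φ) (cor j.1 - (c' / 2) • cor i.1)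
    rw [e4] at this
    have := nonneg_of_mul_nonneg_right this hqb
    linarith
  have hkey : ¬ (c * c' = 4 ∧ af j p = af i p * c / 2) := by
    rintro ⟨h4, h5⟩
    apply hne
    have hcor : cor j.1 = (c' / 2) • cor i.1 := by
      apply sub_eq_zero.1
      apply bf_eq_zero h
      rw [e4, h4]; ring
    have hlin : ∀ y, j.1 y = c / 2 * i.1 y := by
      intro y
      have f1 := bf_cor h hi y
      have f2 := bf_cor h hj y
      rw [show bf Φ (cor j.1) y = c' / 2 * bf Φ (cor i.1) y by rw [hcor, bf_smul_left]] at f2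
      have : Qb * (j.1 y - c / 2 * i.1 y) = 0 := by
        linear_combination (-1) * f2 + c' / 2 * f1 + (i.1 y) / 2 * e3
      rcases mul_eq_zero.1 this with h | h <;> linarith
    intro x
    have hx : af j x = c / 2 * af i x := by
      have g1 := hlin x
      have g2 := hlin p
      simp only [af] at h5 ⊢
      linear_combination g1 - g2 + h5
    simp only [sr]
    rw [hx, hcor, smul_smul]
    congr 2
    linear_combination (af i x) / 4 * h4
  set a := af i p
  set b := af j p
  have hb2 : 0 < b ^ 2 := by positivity
  have habc : 0 < a * b * c := by nlinarith
  have hc0 : c ≠ 0 := by rintro h0; rw [h0] at habc; simp at habc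
  have hcc0 : 0 < c * c' := by
    have : 0 < c ^ 2 := by positivity
    have h6 : 0 < (c * c') * Qa := by
      rw [mul_assoc, e3]; nlinarith
    exact pos_of_mul_pos_left h6 hqa.le
  have habc' : 0 < a * b * c' := by
    by_contra hn
    push Not at hn
    have := mul_nonneg_of_nonpos_of_nonpos hn (neg_nonpos.2 habc.le)
    have hab : 0 < (a * b) ^ 2 := by
      have : a * b ≠ 0 := mul_ne_zero ha0 hb0
      positivity
    nlinarith [mul_pos hab hcc0]
  have hstrict : c * c' < 4 ∨ b ^ 2 < a * b * c / 2 := by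
    by_contra hcon
    push Not at hcon
    apply hkey
    refine ⟨le_antisymm hcc hcon.1, ?_⟩
    have : b * (b - a * c / 2) = 0 := by nlinarith
    rcases mul_eq_zero.1 this with h | h
    · exact absurd h hb0
    · linarith
  have hble : b ^ 2 ≤ a * b * c / 2 := by nlinarith
  have hmain : b * b * (c' * c') < 2 * (a * b * c') := by
    have hc'2 : 0 < c' * c' := by
      have : c' ≠ 0 := by rintro h0; rw [h0] at hcc0; simp at hcc0
      exact mul_self_pos.2 this
    rcases hstrict with hs | hs
    · have g1 := mul_le_mul_of_nonneg_right hble hc'2.le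
      have g2 := mul_lt_mul_of_pos_left hs habc'
      nlinarith
    · have g1 := mul_lt_mul_of_pos_right hs hc'2
      have g2 := mul_le_mul_of_nonneg_left hcc habc'.le
      nlinarith
  constructor
  · have hb4 : b ^ 2 ≤ a ^ 2 * c ^ 2 / 4 := by
      have g := mul_self_le_mul_self hb2.le hble
      have : b ^ 2 * b ^ 2 ≤ b ^ 2 * (a ^ 2 * c ^ 2 / 4) := by linarith
      exact le_of_mul_le_mul_left this hb2
    have ha2 : 0 < a ^ 2 * Qa := by positivity
    have e5 : a ^ 2 * c ^ 2 / 4 * Qb = a ^ 2 * Qa * (c * c') / 4 := by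
      linear_combination (-(a ^ 2 * c / 4)) * e3
    rcases hstrict with hs | hs
    · have g1 := mul_le_mul_of_nonneg_right hb4 hqb.le
      have g2 := mul_lt_mul_of_pos_left hs ha2
      linarith
    · have hb5 : b ^ 2 < a ^ 2 * c ^ 2 / 4 := by
        have g := mul_self_lt_mul_self hb2.le hs
        have : b ^ 2 * b ^ 2 < b ^ 2 * (a ^ 2 * c ^ 2 / 4) := by linarith
        exact lt_of_mul_lt_mul_left this hb2.le
      have g1 := mul_lt_mul_of_pos_right hb5 hqb
      have g2 := mul_le_mul_of_nonneg_left hcc ha2.le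
      linarith
  · nlinarith

lemma gen (h : RS Φ cor) {p : A} (hp : ∀ i : (A →ₗ[ℝ] ℝ) × ℤ, i.1 ∈ Φ → af i p ≠ 0)
    {i : (A →ₗ[ℝ] ℝ) × ℤ} (hi : i.1 ∈ Φ) :
    ∃ l : List ((A →ₗ[ℝ] ℝ) × ℤ), (∀ i ∈ l, Simp Φ cor p i) ∧
      ∀ x, sr cor i x = act cor l x := by
  by_contra hbad
  set dep : (A →ₗ[ℝ] ℝ) × ℤ → ℝ := fun i => af i p ^ 2 * bf Φ (cor i.1) (cor i.1) with hdep
  set Good : (A →ₗ[ℝ] ℝ) × ℤ → Prop := fun i => ∃ l : List ((A →ₗ[ℝ] ℝ) × ℤ),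
    (∀ i ∈ l, Simp Φ cor p i) ∧ ∀ x, sr cor i x = act cor l x with hGood
  have hfin : {k : (A →ₗ[ℝ] ℝ) × ℤ | (k.1 ∈ Φ ∧ dep k ≤ dep i) ∧ ¬ Good k}.Finite :=
    (finite_depth h p (dep i)).subset fun k hk => hk.1
  obtain ⟨i0, ⟨⟨hi0, hd0⟩, hb0⟩, hmin⟩ :=
    Set.exists_min_image _ dep hfin ⟨i, ⟨hi, le_rfl⟩, hbad⟩
  have hless : ∀ k : (A →ₗ[ℝ] ℝ) × ℤ, k.1 ∈ Φ → dep k < dep i0 → Good k := by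
    intro k hk hlt
    by_contra hk'
    exact absurd (hmin k ⟨⟨hk, hlt.le.trans hd0⟩, hk'⟩) (not_le.2 hlt)
  -- a simple reflection is good
  have hns : ¬ Simp Φ cor p i0 := fun hs => hb0 ⟨[i0], by simpa using hs, fun x => rfl⟩
  have hex : ∃ j : (A →ₗ[ℝ] ℝ) × ℤ, j.1 ∈ Φ ∧ af j p * af j (sr cor i0 p) < 0 ∧
      ¬ ∀ x, sr cor j x = sr cor i0 x := by
    by_contra hcon
    push Not at hcon
    exact hns ⟨hi0, hcon⟩
  have hex2 : ∃ j : (A →ₗ[ℝ] ℝ) × ℤ, j.1 ∈ Φ ∧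
      af j p * (af j p - af i0 p * j.1 (cor i0.1) / 2) ≤ 0 ∧
      ¬ ∀ x, sr cor j x = sr cor i0 x := by
    obtain ⟨j, hj, hsep, hne⟩ := hex
    by_cases hh : af j p * (af j p - af i0 p * j.1 (cor i0.1) / 2) ≤ 0
    · exact ⟨j, hj, hh, hne⟩
    · obtain ⟨k, hk, hk1, hk2, -⟩ := conj h hi0 hj
      refine ⟨k, hk, ?_, ?_⟩
      · have e1 := hk1 p
        have e2 := hk1 (sr cor i0 p)
        rw [sr_sr h hi0, af_sr] at e2
        rw [af_sr] at e1 hsep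
        have e3 : af k p - af i0 p * k.1 (cor i0.1) / 2 =
          af j p - af i0 p * j.1 (cor i0.1) / 2 := by linarith
        rw [e3, e1]
        push Not at hh
        by_contra hcon
        push Not at hcon
        have g := mul_pos hh hcon
        nlinarith [mul_nonpos_of_nonpos_of_nonneg hsep.le
          (sq_nonneg (af j p - af i0 p * j.1 (cor i0.1) / 2))]
      · intro hall
        apply hne
        intro x
        have := hall (sr cor i0 x)
        rw [hk2, sr_sr h hi0] at this
        have h2 := congrArg (sr cor i0) this
        rwa [sr_sr h hi0] at h2
  obtain ⟨j, hj, hh, hne⟩ := hex2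
  obtain ⟨d1, d2⟩ := descent h hp hi0 hj hne hh
  obtain ⟨k, hk, hk1, hk2, hk3⟩ := conj h hj hi0
  obtain ⟨lj, hlj, hlj'⟩ := hless j hj d1
  obtain ⟨lk, hlk, hlk'⟩ := hless k hk (by
    simp only [hdep]
    rw [hk1, hk3]
    exact mul_lt_mul_of_pos_right d2 (bf_pos h hi0))
  apply hb0
  refine ⟨lj ++ (lk ++ lj), ?_, fun x => ?_⟩
  · intro t ht
    simp only [List.mem_append] at ht
    rcases ht with ht | ht | ht
    exacts [hlj t ht, hlk t ht, hlj t ht]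
  · rw [act_append, act_append, ← hlj', ← hlk', ← hlj', hk2, sr_sr h hj, sr_sr h hj]

lemma gen_word (h : RS Φ cor) {p : A} (hp : ∀ i : (A →ₗ[ℝ] ℝ) × ℤ, i.1 ∈ Φ → af i p ≠ 0)
    {g : A ≃ᵃ[ℝ] A} (hg : g ∈ affWeyl Φ cor) :
    ∃ l : List ((A →ₗ[ℝ] ℝ) × ℤ), (∀ i ∈ l, Simp Φ cor p i) ∧ ∀ x, g x = act cor l x := by
  have hgen : ∀ g : A ≃ᵃ[ℝ] A,
      (∃ α ∈ Φ, ∃ m : ℤ, ∀ x, g x = x - (α x + (m : ℝ)) • cor α) →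
      ∃ l : List ((A →ₗ[ℝ] ℝ) × ℤ), (∀ i ∈ l, Simp Φ cor p i) ∧ ∀ x, g x = act cor l x := by
    rintro g ⟨α, hα, m, hm⟩
    obtain ⟨l, hl, hl'⟩ := gen h hp (i := (α, m)) hα
    exact ⟨l, hl, fun x => by rw [hm, ← hl']; rfl⟩
  induction hg using Subgroup.closure_induction'' with
  | mem g hg => exact hgen g hg
  | inv_mem g hg =>
    apply hgen
    obtain ⟨α, hα, m, hm⟩ := hg
    refine ⟨α, hα, m, fun x => ?_⟩
    have e : ∀ x, g x = sr cor (α, m) x := hm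
    have : g (sr cor (α, m) x) = x := by rw [e, sr_sr h hα]
    change g.symm x = sr cor (α, m) x
    rw [AffineEquiv.symm_apply_eq, this]
  | one => exact ⟨[], by simp, fun x => rfl⟩
  | mul g g' _ _ hg hg' =>
    obtain ⟨l, hl, e⟩ := hg
    obtain ⟨l', hl', e'⟩ := hg'
    refine ⟨l ++ l', ?_, fun x => ?_⟩
    · intro t ht
      rcases List.mem_append.1 ht with ht | ht
      exacts [hl t ht, hl' t ht]
    · rw [act_append, ← e', ← e]; rfl

lemma gap (Φ : Finset (A →ₗ[ℝ] ℝ)) (q : A) : ∃ δ : ℝ, 0 < δ ∧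
    ∀ i : (A →ₗ[ℝ] ℝ) × ℤ, i.1 ∈ Φ → af i q ≠ 0 → δ ≤ |af i q| := by
  classical
  have h1 : ∀ r : ℝ, ∃ δ : ℝ, 0 < δ ∧ ∀ n : ℤ, r + n ≠ 0 → δ ≤ |r + n| := by
    intro r
    by_cases hr : r = round r
    · refine ⟨1, one_pos, fun n hn => ?_⟩
      rw [hr] at hn ⊢
      have : (round r + n : ℤ) ≠ 0 := by exact_mod_cast hn
      have := Int.one_le_abs this
      exact_mod_cast this
    · refine ⟨|r - round r|, abs_pos.2 (sub_ne_zero.2 hr), fun n _ => ?_⟩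
      have := round_le r (-n)
      simpa using this
  choose f hf hf' using h1
  have h2 : ∀ s : Finset (A →ₗ[ℝ] ℝ), ∃ δ : ℝ, 0 < δ ∧ ∀ α ∈ s, δ ≤ f (α q) := by
    intro s
    induction s using Finset.induction_on with
    | empty => exact ⟨1, one_pos, by simp⟩
    | insert a s _ ih =>
      obtain ⟨δ, hδ, hs⟩ := ih
      refine ⟨min δ (f (a q)), lt_min hδ (hf _), ?_⟩
      intro α hα
      rcases Finset.mem_insert.1 hα with rfl | hα
      · exact min_le_right _ _
      · exact (min_le_left _ _).trans (hs α hα)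
  obtain ⟨δ, hδ, hs⟩ := h2 Φ
  exact ⟨δ, hδ, fun i hi hne => (hs _ hi).trans (hf' _ _ hne)⟩

lemma small (Φ : Finset (A →ₗ[ℝ] ℝ)) (q u u' : A) : ∃ ε : ℝ, 0 < ε ∧
    ∀ i : (A →ₗ[ℝ] ℝ) × ℤ, i.1 ∈ Φ → af i q ≠ 0 →
      |ε * i.1 u| < |af i q| ∧ |ε * i.1 u'| < |af i q| := by
  obtain ⟨δ, hδ, hg⟩ := gap Φ q
  set M := ∑ α ∈ Φ, (|α u| + |α u'|) with hM
  have hM0 : 0 ≤ M := Finset.sum_nonneg fun _ _ => by positivity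
  refine ⟨δ / (M + 1), by positivity, fun i hi hne => ?_⟩
  have h1 := hg i hi hne
  have h2 : |i.1 u| + |i.1 u'| ≤ M :=
    Finset.single_le_sum (f := fun α : A →ₗ[ℝ] ℝ => |α u| + |α u'|)
      (fun _ _ => by positivity) hi
  have key : ∀ t : ℝ, |t| ≤ M → |δ / (M + 1) * t| < |af i q| := by
    intro t ht
    refine lt_of_lt_of_le ?_ h1
    rw [abs_mul, abs_of_pos (by positivity : 0 < δ / (M + 1)), div_mul_eq_mul_div,
      div_lt_iff₀ (by positivity)]
    nlinarith
  exact ⟨key _ (by linarith [abs_nonneg (i.1 u')]), key _ (by linarith [abs_nonneg (i.1 u)])⟩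

lemma af_add (i : (A →ₗ[ℝ] ℝ) × ℤ) (q u : A) (ε : ℝ) :
    af i (q + ε • u) = af i q + ε * i.1 u := by
  simp [af]; ring

lemma mul_pos_of_small {a b : ℝ} (h : |b| < |a|) : 0 < a * (a + b) := by
  have h1 : |a * b| < a * a := by
    rw [abs_mul, ← abs_mul_abs_self a]
    exact mul_lt_mul_of_pos_left h (lt_of_le_of_lt (abs_nonneg _) h)
  have := (abs_lt.1 h1).1
  nlinarith

/-- strict fundamental domain -/
lemma strict_fd (h : RS Φ cor) {u : A} (hu : ∀ α ∈ Φ, α u ≠ 0)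
    {g : A ≃ᵃ[ℝ] A} (hg : g ∈ affWeyl Φ cor) {x : A}
    (hxy : ∀ i : (A →ₗ[ℝ] ℝ) × ℤ, i.1 ∈ Φ → 0 ≤ af i x * af i (g x)) : g x = x := by
  set y := g x with hy
  set q := (1 / 2 : ℝ) • (x + y) with hq
  have hqa : ∀ i : (A →ₗ[ℝ] ℝ) × ℤ, af i q = (af i x + af i y) / 2 := by
    intro i; simp [af, hq]; ring
  obtain ⟨ε, hε, hs⟩ := small Φ q u u
  set p := q + ε • u with hpdef
  have hcase : ∀ i : (A →ₗ[ℝ] ℝ) × ℤ, i.1 ∈ Φ →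
      af i p ≠ 0 ∧ 0 ≤ af i p * af i x ∧ 0 ≤ af i p * af i y := by
    intro i hi
    have hxyi := hxy i hi
    have hqi := hqa i
    by_cases h0 : af i q = 0
    · have hx0 : af i x = 0 := by nlinarith [sq_nonneg (af i x)]
      have hy0 : af i y = 0 := by linarith
      rw [hx0, hy0, hpdef, af_add, h0]
      simp [hε.ne', hu i.1 hi]
    · have h1 := mul_pos_of_small (hs i hi h0).1
      rw [← af_add, ← hpdef] at h1
      have hqx : 0 ≤ af i q * af i x := by rw [hqi]; nlinarith [sq_nonneg (af i x)]
      have hqy : 0 ≤ af i q * af i y := by rw [hqi]; nlinarith [sq_nonneg (af i y)]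
      have hq2 : 0 < af i q ^ 2 := by positivity
      refine ⟨fun h => by rw [h] at h1; simp at h1, ?_, ?_⟩
      · have := mul_nonneg h1.le hqx
        have : 0 ≤ af i q ^ 2 * (af i p * af i x) := by linarith
        exact nonneg_of_mul_nonneg_right this hq2
      · have := mul_nonneg h1.le hqy
        have : 0 ≤ af i q ^ 2 * (af i p * af i y) := by linarith
        exact nonneg_of_mul_nonneg_right this hq2
  have hp : ∀ i : (A →ₗ[ℝ] ℝ) × ℤ, i.1 ∈ Φ → af i p ≠ 0 := fun i hi => (hcase i hi).1
  obtain ⟨l, hl, hl'⟩ := gen_word h hp hg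
  exact (word_fix_s8 h hp (fun i hi => (hcase i hi).2.1) (fun i hi => (hcase i hi).2.2)
    l.length l le_rfl hl (by rw [← hl'])).symm

lemma face_unsep {pos : Finset (A →ₗ[ℝ] ℝ)} (hsplit : ∀ α ∈ Φ, α ∈ pos ∨ -α ∈ pos)
    {F : Set A} (hF : IsFace pos F) {x y : A} (hx : x ∈ F) (hy : y ∈ F)
    (i : (A →ₗ[ℝ] ℝ) × ℤ) (hi : i.1 ∈ Φ) : 0 ≤ af i x * af i y := by
  obtain ⟨-, σ, rfl⟩ := hF
  have key : ∀ β ∈ pos, ∀ m : ℤ, 0 ≤ (β x + m) * (β y + m) := by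
    intro β hβ m
    have hx1 := Set.mem_iInter.1 (Set.mem_iInter₂.1 hx β hβ) m
    have hy1 := Set.mem_iInter.1 (Set.mem_iInter₂.1 hy β hβ) m
    unfold halfChoice at hx1 hy1
    split_ifs at hx1 hy1
    · have : β x + m = 0 := hx1
      rw [this]; simp
    · exact mul_nonneg hx1 hy1
    · exact mul_nonneg_of_nonpos_of_nonpos hx1 hy1
  rcases hsplit i.1 hi with hp | hp
  · exact key _ hp _
  · have := key _ hp (-i.2)
    simp only [LinearMap.neg_apply, Int.cast_neg] at this
    unfold af
    linarith

lemma chamber_unsep {C : Set A} {x0 : A} (hx0 : x0 ∈ (wallsSet Φ)ᶜ)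
    (hC : C = closure (connectedComponentIn (wallsSet Φ)ᶜ x0)) {α : A →ₗ[ℝ] ℝ} (hα : α ∈ Φ)
    {u : A} (hu : u ∈ C) : 0 ≤ α x0 * α u := by
  have hcont : Continuous α := α.continuous_of_finiteDimensional
  have hcl : IsClosed {z : A | 0 ≤ α x0 * α z} :=
    isClosed_le continuous_const (continuous_const.mul hcont)
  rw [hC] at hu
  refine closure_minimal ?_ hcl hu
  intro z hz
  by_contra hneg
  have hneg : α x0 * α z < 0 := not_le.1 hneg
  have hpre : IsPreconnected (connectedComponentIn (wallsSet Φ)ᶜ x0) :=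
    isPreconnected_connectedComponentIn
  have hx0m := mem_connectedComponentIn hx0
  obtain ⟨w, hw, hw0⟩ := hpre.intermediate_value hz hx0m
    (f := fun z => α x0 * α z) (continuous_const.mul hcont).continuousOn
    (show (0 : ℝ) ∈ Set.Icc _ _ from ⟨hneg.le, mul_self_nonneg _⟩)
  have hnw : ∀ w ∈ (wallsSet Φ)ᶜ, α w ≠ 0 := by
    intro w hw h0
    apply hw
    simp only [wallsSet, Set.mem_iUnion]
    exact ⟨α, hα, h0⟩
  rcases mul_eq_zero.1 hw0 with h | h
  · exact hnw _ hx0 h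
  · exact hnw _ (connectedComponentIn_subset _ _ hw) h

end helpers

/-- A sector contains at most one edge of each type emanating from its vertex:
if `E, E'` are edges containing a vertex `V`, both contained in the sector `V + C` for a closed
Weyl chamber `C`, and `E` and `E'` have the same type, then `E = E'`. -/
theorem statement8 {A : Type*} [NormedAddCommGroup A] [NormedSpace ℝ A]
    [FiniteDimensional ℝ A]
    (Φ pos : Finset (A →ₗ[ℝ] ℝ)) (cor : (A →ₗ[ℝ] ℝ) → A)
    -- `Φ` is a finite crystallographic root system of linear functionals spanning the dual,
    -- with positive system `pos` and coroots `cor`: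
    (hne : ∀ α ∈ Φ, α ≠ (0 : A →ₗ[ℝ] ℝ))
    (hspan : Submodule.span ℝ (Φ : Set (A →ₗ[ℝ] ℝ)) = ⊤)
    (hpos : pos ⊆ Φ)
    (hsplit : ∀ α ∈ Φ, α ∈ pos ∨ -α ∈ pos)
    (hnotboth : ∀ α ∈ pos, -α ∉ pos)
    (hcor : ∀ α ∈ Φ, α (cor α) = 2)
    (hcrys : ∀ α ∈ Φ, ∀ β ∈ Φ, ∃ m : ℤ, β (cor α) = (m : ℝ))
    (hinv : ∀ α ∈ Φ, ∀ β ∈ Φ, β - β (cor α) • α ∈ Φ)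
    -- a vertex `V`, a closed Weyl chamber `C` and two edges `E, E'` with `V ⊆ E`, `V ⊆ E'`,
    -- both contained in the sector `V + C`:
    (Vf E E' : Set A)
    (hV : IsVertexFace pos Vf)
    (hE : IsEdgeFace pos E) (hE' : IsEdgeFace pos E')
    (hVE : Vf ⊆ E) (hVE' : Vf ⊆ E')
    (C : Set A) (hC : IsWeylChamber Φ C)
    (hEC : E ⊆ Vf + C) (hE'C : E' ⊆ Vf + C)
    -- if `E` and `E'` have the same type, then they are equal:
    (hsame : SameType Φ cor E E') :
    E = E' := by
  have h : RS Φ cor := ⟨hspan, hcor, hcrys, hinv⟩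
  obtain ⟨x0, hx0, hCeq⟩ := hC
  obtain ⟨g, hg, hgE⟩ := hsame
  have hu : ∀ α ∈ Φ, α x0 ≠ 0 := by
    intro α hα h0
    apply hx0
    simp only [wallsSet, Set.mem_iUnion]
    exact ⟨α, hα, h0⟩
  obtain ⟨v, hv⟩ := hV.1.1
  have hVs : Vf = {v} := by
    have h0 : (affineSpan ℝ Vf).direction = ⊥ := Submodule.finrank_eq_zero.1 hV.2
    apply Set.eq_singleton_iff_unique_mem.2 ⟨hv, fun w hw => ?_⟩
    have h1 : w -ᵥ v ∈ (affineSpan ℝ Vf).direction :=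
      AffineSubspace.vsub_mem_direction (subset_affineSpan ℝ _ hw) (subset_affineSpan ℝ _ hv)
    rw [h0, Submodule.mem_bot] at h1
    exact vsub_eq_zero_iff_eq.1 h1
  have hgv : g v = v := by
    apply strict_fd h hu hg
    have h1 : g v ∈ E' := by rw [← hgE]; exact Set.mem_image_of_mem _ (hVE hv)
    exact face_unsep hsplit hE'.1 (hVE' hv) h1
  have hfix : ∀ x ∈ E, g x = x := by
    intro x hx
    have hgx : g x ∈ E' := by rw [← hgE]; exact Set.mem_image_of_mem _ hx
    have hxC : x - v ∈ C := by
      have := hEC hx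
      rw [hVs, Set.singleton_add] at this
      obtain ⟨c, hc, rfl⟩ := this
      simpa using hc
    have hgxC : g x - v ∈ C := by
      have := hE'C hgx
      rw [hVs, Set.singleton_add] at this
      obtain ⟨c, hc, he⟩ := this
      rw [← he]
      simpa using hc
    obtain ⟨ε, hε, hs⟩ := small Φ v (x - v) (g x - v)
    have hlin : ∀ y, g.linear (y - v) = g y - v := by
      intro y
      have := g.toAffineMap.linearMap_vsub y v
      simpa [hgv] using this
    have hgε : g (v + ε • (x - v)) = v + ε • (g x - v) := by
      have := hlin (v + ε • (x - v))
      rw [add_sub_cancel_left, map_smul, hlin] at this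
      rw [this]; abel
    have hfe : g (v + ε • (x - v)) = v + ε • (x - v) := by
      apply strict_fd h hu hg
      intro i hi
      rw [hgε, af_add, af_add]
      by_cases h0 : af i v = 0
      · have h1 := chamber_unsep hx0 hCeq hi hxC
        have h2 := chamber_unsep hx0 hCeq hi hgxC
        have h3 : 0 < i.1 x0 ^ 2 := by
          have := hu i.1 hi
          positivity
        have h4 : 0 ≤ i.1 x0 ^ 2 * (i.1 (x - v) * i.1 (g x - v)) := by
          have := mul_nonneg h1 h2
          linarith
        have h5 := nonneg_of_mul_nonneg_right h4 h3
        rw [h0]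
        have := mul_nonneg (sq_nonneg ε) h5
        linarith
      · obtain ⟨s1, s2⟩ := hs i hi h0
        have t1 := mul_pos_of_small s1
        have t2 := mul_pos_of_small s2
        have h3 : 0 < af i v ^ 2 := by positivity
        have h4 := mul_pos t1 t2
        refine nonneg_of_mul_nonneg_right (a := af i v ^ 2) ?_ h3
        linarith
    rw [hgε] at hfe
    have h1 := smul_right_injective A hε.ne' (add_left_cancel hfe)
    exact sub_left_injective h1
  rw [← hgE]
  ext z
  constructor
  · intro hz
    exact ⟨z, hz, hfix z hz⟩
  · rintro ⟨x, hx, rfl⟩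
    rw [hfix x hx]; exact hx
end
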